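/- arXiv:2311.11996 — 2 statements merged into one kernel-verified Lean document; each statement's English description precedes it below -/
import Mathlib

section
/- Let M be a loopless matroid of rank r ≥ 1 on a finite ground set E, let S_1,…,S_m be pairwise distinct nonempty subsets of E, and let k_1,…,k_m be nonnegative integers. Define χ(q) = Σ_{κ} Π_{i=1}^m binom(q·k_i + κ_i − 1, κ_i), where the (finite) sum is over all κ ∈ ℤ_{≥0}^m satisfying the dragon Hall–Rado condition; this is a polynomial in q of some degree d ≥ 0 with χ(0)=1. Define rational numbers h_0,…,h_d by χ(q) = Σ_{j=0}^d h_j·binom(q+d−j, d). Then (h_0,…,h_d) is a Macaulay vector; in particular each h_j is a nonnegative integer. -/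
open Finset Polynomial

/-- The rank-function axioms of a matroid on a finite ground set: a matroid is a polymatroid
with cage `(1, …, 1)`. -/
def IsMatroidRank {α : Type*} [Fintype α] [DecidableEq α] (rk : Finset α → ℕ) : Prop :=
  rk ∅ = 0 ∧ (∀ I J : Finset α, I ⊆ J → rk I ≤ rk J) ∧
    (∀ I J : Finset α, rk (I ∩ J) + rk (I ∪ J) ≤ rk I + rk J) ∧
    ∀ e : α, rk {e} ≤ 1

/-- The dragon Hall–Rado condition for a tuple `κ ∈ ℤ_{≥0}^m` with respect to subsets
`S_1, …, S_m` of the ground set of a matroid with rank function `rk`. -/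
def DragonHallRado {α : Type*} [Fintype α] [DecidableEq α] (rk : Finset α → ℕ) {m : ℕ}
    (S : Fin m → Finset α) (κ : Fin m → ℕ) : Prop :=
  ∀ I : Finset (Fin m), I.Nonempty → 1 + ∑ i ∈ I, κ i ≤ rk (I.biUnion S)

/-- `binomLowerP p k` is `binom(p + k - 1, k) = p(p+1)⋯(p+k-1)/k!`. -/
noncomputable def binomLowerP (p : Polynomial ℚ) (k : ℕ) : Polynomial ℚ :=
  (k.factorial : ℚ)⁻¹ • ∏ j ∈ Finset.range k, (p + Polynomial.C (j : ℚ))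

/-- A sequence `(h 0, …, h d)` is a Macaulay vector if `(h 0, …, h d, 0, 0, …)` is the Hilbert
function of a graded artinian commutative algebra `A` over a field `𝕜`, with `A^0 = 𝕜`,
generated as a `𝕜`-algebra in degree `1`. -/
def IsMacaulayVector (d : ℕ) (h : ℕ → ℚ) : Prop :=
  ∃ (𝕜 A : Type) (_ : Field 𝕜) (_ : CommRing A) (_ : Algebra 𝕜 A)
    (𝒜 : ℕ → Submodule 𝕜 A) (_ : GradedAlgebra 𝒜),
      IsArtinianRing A ∧
      (∀ x ∈ 𝒜 0, ∃ c : 𝕜, x = algebraMap 𝕜 A c) ∧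
      Algebra.adjoin 𝕜 (𝒜 1 : Set A) = ⊤ ∧
      (∀ k : ℕ, Module.Finite 𝕜 (𝒜 k)) ∧
      ∀ k : ℕ, (Module.finrank 𝕜 (𝒜 k) : ℚ) = if k ≤ d then h k else 0

/-! ### Part 1: associated graded algebra of a filtered algebra with an adapted basis -/

section PartOne

set_option linter.unusedSectionVars false

variable {Φ V B : Type} [Fintype Φ] [CommRing B] [Algebra ℚ B]

/-- The span of the basis vectors of degree at most `j`. -/
def filtW (deg : Φ → ℕ) (b : Module.Basis Φ ℚ B) (j : ℕ) : Submodule ℚ B where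
  carrier := {g | ∀ φ, j < deg φ → b.repr g φ = 0}
  add_mem' := by
    intro x y hx hy φ h
    simp [hx φ h, hy φ h]
  zero_mem' := by
    intro φ h
    simp
  smul_mem' := by
    intro c x hx φ h
    simp [hx φ h]

lemma filtW_prod (deg : Φ → ℕ) (b : Module.Basis Φ ℚ B) (X : V → B)
    (h1 : ∀ v, X v ∈ filtW deg b 1) (hone : (1 : B) ∈ filtW deg b 0)
    (hmul : ∀ i j x y, x ∈ filtW deg b i → y ∈ filtW deg b j → x * y ∈ filtW deg b (i + j))
    (s : V →₀ ℕ) : (s.prod fun v e => X v ^ e) ∈ filtW deg b s.degree := by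
  classical
  induction s using Finsupp.induction_linear with
  | zero => simpa using hone
  | add f g hf hg =>
    rw [Finsupp.prod_add_index' (by simp) (by intros; rw [pow_add])]
    rw [map_add]
    exact hmul _ _ _ _ hf hg
  | single a n =>
    rw [Finsupp.prod_single_index (by simp), Finsupp.degree_single]
    induction n with
    | zero => simpa using hone
    | succ n ih => rw [pow_succ]; exact hmul _ _ _ _ ih (h1 a)

lemma filtW_aeval (deg : Φ → ℕ) (b : Module.Basis Φ ℚ B) (X : V → B)
    (h1 : ∀ v, X v ∈ filtW deg b 1) (hone : (1 : B) ∈ filtW deg b 0)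
    (hmul : ∀ i j x y, x ∈ filtW deg b i → y ∈ filtW deg b j → x * y ∈ filtW deg b (i + j))
    (j : ℕ) (p : MvPolynomial V ℚ) (hp : p.IsHomogeneous j) :
    MvPolynomial.aeval X p ∈ filtW deg b j := by
  classical
  rw [p.as_sum, map_sum]
  refine Submodule.sum_mem _ fun s hs => ?_
  rw [MvPolynomial.aeval_monomial, ← Algebra.smul_def]
  refine Submodule.smul_mem _ _ ?_
  have h0 := hp (MvPolynomial.mem_support_iff.mp hs)
  have h2 : s.degree = j := (DFunLike.congr_fun Finsupp.degree_eq_weight_one s).trans h0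
  rw [← h2]
  exact filtW_prod deg b X h1 hone hmul s

/-- coordinates of the top-degree symbols -/
noncomputable def symbMap (deg : Φ → ℕ) (b : Module.Basis Φ ℚ B) (X : V → B) :
    MvPolynomial V ℚ →ₗ[ℚ] (Φ → ℚ) :=
  LinearMap.pi fun φ => (b.coord φ) ∘ₗ (MvPolynomial.aeval X).toLinearMap ∘ₗ
    (MvPolynomial.homogeneousComponent (deg φ))

lemma symbMap_apply (deg : Φ → ℕ) (b : Module.Basis Φ ℚ B) (X : V → B)
    (p : MvPolynomial V ℚ) (φ : Φ) : symbMap deg b X p φ =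
    b.repr (MvPolynomial.aeval X (MvPolynomial.homogeneousComponent (deg φ) p)) φ := rfl

lemma symbMap_hom (deg : Φ → ℕ) (b : Module.Basis Φ ℚ B) (X : V → B)
    (p : MvPolynomial V ℚ) (j : ℕ) (hp : p.IsHomogeneous j) (φ : Φ) : symbMap deg b X p φ =
    if deg φ = j then b.repr (MvPolynomial.aeval X p) φ else 0 := by
  rw [symbMap_apply, MvPolynomial.homogeneousComponent_of_mem hp]
  split_ifs <;> simp

lemma macaulay_of_filtered (deg : Φ → ℕ) (b : Module.Basis Φ ℚ B) (X : V → B)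
    (h1 : ∀ v, X v ∈ filtW deg b 1) (hone : (1 : B) ∈ filtW deg b 0)
    (hmul : ∀ i j x y, x ∈ filtW deg b i → y ∈ filtW deg b j → x * y ∈ filtW deg b (i + j))
    (hb : ∀ φ, ∃ p : MvPolynomial V ℚ, p.IsHomogeneous (deg φ) ∧ MvPolynomial.aeval X p = b φ)
    (d : ℕ) (h : ℕ → ℚ)
    (hh : ∀ j, (Nat.card {φ // deg φ = j} : ℚ) = if j ≤ d then h j else 0) :
    IsMacaulayVector d h := by
  classical
  set Λ := symbMap deg b X with hΛ
  have hmulJ : ∀ q p : MvPolynomial V ℚ, Λ p = 0 → Λ (q * p) = 0 := by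
    intro q p hp
    have key : ∀ i j, ∀ q' p' : MvPolynomial V ℚ, q'.IsHomogeneous i → p'.IsHomogeneous j →
        Λ p' = 0 → Λ (q' * p') = 0 := by
      intro i j q' p' hq' hp' hz
      have hmem : MvPolynomial.aeval X p' ∈ filtW deg b j := filtW_aeval deg b X h1 hone hmul j p' hp'
      have hz' : ∀ φ, deg φ = j → b.repr (MvPolynomial.aeval X p') φ = 0 := by
        intro φ hφ
        have := congrFun hz φ
        rwa [hΛ, symbMap_hom deg b X p' j hp', if_pos hφ] at this
      have hq'' := filtW_aeval deg b X h1 hone hmul i q' hq'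
      funext φ
      rw [hΛ, symbMap_hom deg b X _ (i + j) (hq'.mul hp')]
      split_ifs with hφ
      · rw [map_mul]
        rcases j with _ | j
        · have : MvPolynomial.aeval X p' = 0 := by
            apply b.repr.injective
            ext φ'
            rcases Nat.eq_zero_or_pos (deg φ') with h0 | h0
            · simpa using hz' φ' h0
            · simpa using hmem φ' h0
          simp [this]
        · have : MvPolynomial.aeval X p' ∈ filtW deg b j := by
            intro φ' hφ'
            rcases Nat.lt_or_ge (j + 1) (deg φ') with h0 | h0
            · exact hmem φ' h0
            · exact hz' φ' (by omega)
          exact hmul _ _ _ _ hq'' this φ (by omega)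
      · rfl
    have hpc : ∀ j, Λ (MvPolynomial.homogeneousComponent j p) = 0 := by
      intro j
      funext φ
      rw [hΛ, symbMap_hom deg b X _ j (MvPolynomial.homogeneousComponent_isHomogeneous j p)]
      split_ifs with hφ
      · have := congrFun hp φ
        rw [hΛ, symbMap_apply, hφ] at this
        exact this
      · rfl
    rw [← MvPolynomial.sum_homogeneousComponent p, ← MvPolynomial.sum_homogeneousComponent q,
      Finset.sum_mul_sum, map_sum]
    refine Finset.sum_eq_zero fun i _ => ?_
    rw [map_sum]
    refine Finset.sum_eq_zero fun j _ => ?_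
    exact key i j _ _ (MvPolynomial.homogeneousComponent_isHomogeneous i q)
      (MvPolynomial.homogeneousComponent_isHomogeneous j p) (hpc j)
  let J : Ideal (MvPolynomial V ℚ) :=
    { carrier := {p | Λ p = 0}
      add_mem' := by
        intro x y hx hy
        have hx' : Λ x = 0 := hx
        have hy' : Λ y = 0 := hy
        change Λ (x + y) = 0
        rw [map_add, hx', hy', add_zero]
      zero_mem' := map_zero Λ
      smul_mem' := fun c x hx => hmulJ c x hx }
  let mk : MvPolynomial V ℚ →ₐ[ℚ] (MvPolynomial V ℚ ⧸ J) := Ideal.Quotient.mkₐ ℚ J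
  have mksurj : Function.Surjective mk := Ideal.Quotient.mkₐ_surjective ℚ J
  have hker : LinearMap.ker mk.toLinearMap = LinearMap.ker Λ := by
    ext p
    rw [LinearMap.mem_ker, LinearMap.mem_ker]
    change Ideal.Quotient.mk J p = 0 ↔ _
    rw [Ideal.Quotient.eq_zero_iff_mem]
    rfl
  have hsingle : ∀ φ, ∃ p : MvPolynomial V ℚ, p.IsHomogeneous (deg φ) ∧ Λ p = Pi.single φ 1 := by
    intro φ
    obtain ⟨p, hp, hpe⟩ := hb φ
    refine ⟨p, hp, ?_⟩
    funext φ'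
    rw [hΛ, symbMap_hom deg b X p _ hp, hpe]
    by_cases h : φ' = φ
    · subst h; simp
    · simp [h]
  have Λsurj : Function.Surjective Λ := by
    intro g
    choose p hp hpe using hsingle
    refine ⟨∑ φ, g φ • p φ, ?_⟩
    rw [map_sum]
    funext φ'
    simp [hpe, Pi.single_apply]
  let e : (MvPolynomial V ℚ ⧸ J) ≃ₗ[ℚ] (Φ → ℚ) :=
    (mk.toLinearMap.quotKerEquivOfSurjective mksurj).symm ≪≫ₗ
      (Submodule.quotEquivOfEq _ _ hker) ≪≫ₗ (Λ.quotKerEquivOfSurjective Λsurj)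
  have he : ∀ p, e (mk p) = Λ p := by
    intro p
    have : (mk.toLinearMap.quotKerEquivOfSurjective mksurj).symm (mk p) = Submodule.Quotient.mk p := by
      rw [LinearEquiv.symm_apply_eq]; rfl
    simp only [e, LinearEquiv.trans_apply, this]
    rfl
  let 𝒜 : ℕ → Submodule ℚ (MvPolynomial V ℚ ⧸ J) := fun j =>
    (MvPolynomial.homogeneousSubmodule V ℚ j).map mk.toLinearMap
  have hA1 : ∀ j x, x ∈ 𝒜 j → ∀ φ, deg φ ≠ j → e x φ = 0 := by
    rintro j x ⟨p, hp, rfl⟩ φ hφ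
    change e (mk p) φ = 0
    rw [he, hΛ, symbMap_hom deg b X p j hp, if_neg hφ]
  have hA2 : ∀ φ, e.symm (Pi.single φ 1) ∈ 𝒜 (deg φ) := by
    intro φ
    obtain ⟨p, hp, hpe⟩ := hsingle φ
    refine ⟨p, hp, ?_⟩
    change mk p = _
    rw [LinearEquiv.eq_symm_apply, he, hpe]
  have hA3 : ∀ j (g : Φ → ℚ), (∀ φ, deg φ ≠ j → g φ = 0) → e.symm g ∈ 𝒜 j := by
    intro j g hg
    have : g = ∑ φ, g φ • (Pi.single φ (1:ℚ) : Φ → ℚ) := by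
      funext φ'
      simp [Pi.single_apply]
    rw [this, map_sum]
    refine Submodule.sum_mem _ fun φ _ => ?_
    rw [map_smul]
    by_cases hφ : deg φ = j
    · exact Submodule.smul_mem _ _ (hφ ▸ hA2 φ)
    · rw [hg φ hφ, zero_smul]; exact Submodule.zero_mem _
  have hfd : ∀ j, ∃ f : 𝒜 j ≃ₗ[ℚ] ({φ // deg φ = j} → ℚ), True := by
    intro j
    let f : 𝒜 j →ₗ[ℚ] ({φ // deg φ = j} → ℚ) :=
      (LinearMap.funLeft ℚ ℚ (Subtype.val : {φ // deg φ = j} → Φ)) ∘ₗ e.toLinearMap ∘ₗ (𝒜 j).subtype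
    have hf : ∀ x φ, f x φ = e x.1 φ.1 := fun x φ => rfl
    refine ⟨LinearEquiv.ofBijective f ⟨?_, ?_⟩, trivial⟩
    · rw [← LinearMap.ker_eq_bot, LinearMap.ker_eq_bot']
      intro x hx
      apply Subtype.ext
      apply e.injective
      rw [Submodule.coe_zero, map_zero]
      funext φ
      by_cases hφ : deg φ = j
      · exact congrFun hx ⟨φ, hφ⟩
      · exact hA1 j x.1 x.2 φ hφ
    · intro g
      refine ⟨⟨e.symm (fun φ => if hφ : deg φ = j then g ⟨φ, hφ⟩ else 0), hA3 j _ ?_⟩, ?_⟩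
      · intro φ hφ
        rw [dif_neg hφ]
      · funext φ
        rw [hf]
        simp [φ.2]
  have hinternal : DirectSum.IsInternal 𝒜 := by
    apply DirectSum.isInternal_submodule_of_iSupIndep_of_iSup_eq_top
    · apply iSupIndep_of_dfinsupp_lsum_injective
      refine (injective_iff_map_eq_zero _).mpr ?_
      intro x hx
      ext j
      apply e.injective
      rw [DFinsupp.zero_apply, Submodule.coe_zero, map_zero]
      funext φ
      by_cases hφ : deg φ = j
      · have h2 := congrFun (congrArg e hx) φ
        rw [map_zero, DFinsupp.lsum_apply_apply, DFinsupp.sumAddHom_apply, DFinsupp.sum,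
          map_sum, Finset.sum_apply] at h2
        rw [Finset.sum_eq_single j] at h2
        · exact h2
        · intro i _ hij
          exact hA1 i _ (x i).2 φ (by omega)
        · intro hj
          rw [DFinsupp.notMem_support_iff] at hj
          simp [hj]
      · exact hA1 j _ (x j).2 φ hφ
    · rw [eq_top_iff]
      intro a _
      obtain ⟨p, rfl⟩ := mksurj a
      rw [← MvPolynomial.sum_homogeneousComponent p, map_sum]
      refine Submodule.sum_mem _ fun j _ => ?_
      exact Submodule.mem_iSup_of_mem j
        ⟨_, MvPolynomial.homogeneousComponent_isHomogeneous j p, rfl⟩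
  have hgm : SetLike.GradedMonoid 𝒜 :=
    { one_mem := ⟨1, MvPolynomial.isHomogeneous_one V ℚ, map_one mk⟩
      mul_mem := by
        rintro i j _ _ ⟨p, hp, rfl⟩ ⟨q, hq, rfl⟩
        exact ⟨p * q, MvPolynomial.IsHomogeneous.mul hp hq, map_mul mk p q⟩ }
  let hdec : DirectSum.Decomposition 𝒜 := hinternal.chooseDecomposition
  let hga : GradedAlgebra 𝒜 := { hgm, hdec with }
  have hfin : Module.Finite ℚ (MvPolynomial V ℚ ⧸ J) := Module.Finite.equiv e.symm
  refine ⟨ℚ, MvPolynomial V ℚ ⧸ J, inferInstance, inferInstance, inferInstance, 𝒜, hga,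
    IsArtinianRing.of_finite ℚ _, ?_, ?_, ?_, ?_⟩
  · rintro x ⟨p, hp, rfl⟩
    have hp0 : p.totalDegree = 0 := Nat.le_zero.mp (MvPolynomial.IsHomogeneous.totalDegree_le hp)
    rw [MvPolynomial.totalDegree_eq_zero_iff_eq_C] at hp0
    refine ⟨p.coeff 0, ?_⟩
    change mk p = _
    conv_lhs => rw [hp0]
    exact mk.commutes _
  · rw [eq_top_iff]
    intro a _
    obtain ⟨p, rfl⟩ := mksurj a
    induction p using MvPolynomial.induction_on with
    | C c => exact (Algebra.adjoin ℚ _).algebraMap_mem c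
    | add p q hp hq => rw [map_add]; exact add_mem (hp trivial) (hq trivial)
    | mul_X p v hp =>
      rw [map_mul]
      exact mul_mem (hp trivial) (Algebra.subset_adjoin
        ⟨_, MvPolynomial.isHomogeneous_X ℚ v, rfl⟩)
  · intro j
    infer_instance
  · intro j
    obtain ⟨f, -⟩ := hfd j
    rw [LinearEquiv.finrank_eq f, Module.finrank_fintype_fun_eq_card, ← hh j,
      Nat.card_eq_fintype_card]

end PartOne

/-! ### Part 2: shellings of balanced complexes -/

section PartTwo

set_option linter.unusedSectionVars false

variable {Φ Y : Type} [Fintype Φ] [LinearOrder Φ] {d : ℕ}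

/-- `w` and `w'` have the same vertices of all colors in `T`. -/
def Agree (c : Fin d → Φ → Y) (T : Finset (Fin d)) (w w' : Φ) : Prop :=
  ∀ r ∈ T, c r w = c r w'

open Classical in
/-- Indicator function of the set of facets agreeing with `w` on `T`. -/
noncomputable def indA (c : Fin d → Φ → Y) (w : Φ) (T : Finset (Fin d)) : Φ → ℚ :=
  fun w' => if Agree c T w w' then 1 else 0

/-- The shelling property. -/
def IsShelling (c : Fin d → Φ → Y) (D : Φ → Finset (Fin d)) : Prop :=
  ∀ w T, (∀ w', Agree c T w w' → w ≤ w') ↔ D w ⊆ T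

lemma indA_min {c : Fin d → Φ → Y} {D : Φ → Finset (Fin d)} (H : IsShelling c D)
    {w w' : Φ} (h : indA c w (D w) w' ≠ 0) : w ≤ w' := by
  classical
  unfold indA at h
  have h2 : Agree c (D w) w w' := by
    by_contra h3
    exact h (if_neg h3)
  exact (H w (D w)).mpr (Finset.Subset.refl _) w' h2

lemma indA_linInd {c : Fin d → Φ → Y} {D : Φ → Finset (Fin d)} (H : IsShelling c D) :
    LinearIndependent ℚ (fun w => indA c w (D w)) := by
  classical
  rw [Fintype.linearIndependent_iff]
  intro g hg w
  induction w using WellFoundedLT.induction with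
  | ind w ih =>
    have h2 := congrFun hg w
    rw [Finset.sum_apply, Finset.sum_eq_single w] at h2
    · simpa [indA, Agree] using h2
    · intro w' _ hne
      rcases lt_or_gt_of_ne hne with h | h
      · simp [ih w' h]
      · have : indA c w' (D w') w = 0 := by
          by_contra h3
          exact absurd (indA_min H h3) (not_le.mpr h)
        simp [this]
    · simp

lemma exists_min_rep (c : Fin d → Φ → Y) (T : Finset (Fin d)) (w : Φ) :
    ∃ u, Agree c T w u ∧ ∀ u', Agree c T u u' → u ≤ u' := by
  classical
  have hne : (Finset.univ.filter (fun u => Agree c T w u)).Nonempty :=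
    ⟨w, Finset.mem_filter.mpr ⟨Finset.mem_univ _, fun _ _ => rfl⟩⟩
  refine ⟨Finset.min' _ hne, ?_, ?_⟩
  · exact (Finset.mem_filter.mp (Finset.min'_mem _ hne)).2
  · intro u' hu'
    apply Finset.min'_le
    rw [Finset.mem_filter]
    refine ⟨Finset.mem_univ _, fun r hr => ?_⟩
    exact ((Finset.mem_filter.mp (Finset.min'_mem _ hne)).2 r hr).trans (hu' r hr)

lemma indA_congr {c : Fin d → Φ → Y} {T : Finset (Fin d)} {w u : Φ} (h : Agree c T w u) :
    indA c w T = indA c u T := by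
  classical
  funext x
  unfold indA
  have : Agree c T w x ↔ Agree c T u x :=
    ⟨fun h2 r hr => (h r hr).symm.trans (h2 r hr), fun h2 r hr => (h r hr).trans (h2 r hr)⟩
  simp only [this]

lemma indA_mem_span {c : Fin d → Φ → Y} {D : Φ → Finset (Fin d)} (H : IsShelling c D)
    (T : Finset (Fin d)) (w : Φ) :
    indA c w T ∈ Submodule.span ℚ ((fun w => indA c w (D w)) '' {u | D u ⊆ T}) := by
  classical
  have key : ∀ w, D w ⊆ T →
      indA c w T ∈ Submodule.span ℚ ((fun w => indA c w (D w)) '' {u | D u ⊆ T}) := by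
    intro w
    induction w using WellFoundedGT.induction with
    | ind w ih =>
      intro hw
      have hsum : indA c w T = indA c w (D w) -
          ∑ u ∈ Finset.univ.filter (fun u => D u ⊆ T ∧ u ≠ w ∧ Agree c (D w) w u), indA c u T := by
        rw [eq_sub_iff_add_eq]
        funext x
        rw [Pi.add_apply, Finset.sum_apply]
        obtain ⟨v, hv, hvm⟩ := exists_min_rep c T x
        have hvD : D v ⊆ T := (H v T).mp hvm
        have huniq : ∀ u, D u ⊆ T → Agree c T u x → u = v := by
          intro u hu hux
          have h1 := (H u T).mpr hu v (fun r hr => (hux r hr).trans (hv r hr))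
          have h2 := hvm u (fun r hr => ((hux r hr).trans (hv r hr)).symm)
          exact le_antisymm h1 h2
        have hiff : Agree c (D w) w x ↔ Agree c (D w) w v :=
          ⟨fun h r hr => (h r hr).trans (hv r (hw hr)),
            fun h r hr => (h r hr).trans (hv r (hw hr)).symm⟩
        by_cases hvw : v = w
        · have h1 : Agree c T w x := fun r hr => hvw ▸ (hv r hr).symm
          have h2 : Agree c (D w) w x := fun r hr => h1 r (hw hr)
          rw [Finset.sum_eq_zero]
          · simp [indA, h1, h2]
          · intro u hu
            rw [Finset.mem_filter] at hu
            unfold indA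
            rw [if_neg]
            intro hux
            exact hu.2.2.1 ((huniq u hu.2.1 hux).trans hvw)
        · have h1 : ¬ Agree c T w x := fun h => hvw (huniq w hw h).symm
          have h1' : indA c w T x = 0 := by simp [indA, h1]
          rw [h1', zero_add]
          by_cases hx : Agree c (D w) w v
          · rw [Finset.sum_eq_single v]
            · have : Agree c T v x := fun r hr => (hv r hr).symm
              simp [indA, this, hiff.mpr hx]
            · intro u hu huv
              rw [Finset.mem_filter] at hu
              unfold indA
              rw [if_neg]
              intro hux
              exact huv (huniq u hu.2.1 hux)
            · intro h
              exact absurd (Finset.mem_filter.mpr ⟨Finset.mem_univ v, hvD, hvw, hx⟩) h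
          · rw [Finset.sum_eq_zero]
            · simp [indA, hiff, hx]
            · intro u hu
              rw [Finset.mem_filter] at hu
              unfold indA
              rw [if_neg]
              intro hux
              have := huniq u hu.2.1 hux
              exact hx (this ▸ hu.2.2.2)
      rw [hsum]
      refine Submodule.sub_mem _ (Submodule.subset_span ⟨w, hw, rfl⟩) (Submodule.sum_mem _ ?_)
      intro u hu
      rw [Finset.mem_filter] at hu
      refine ih u (lt_of_le_of_ne ?_ (Ne.symm hu.2.2.1)) hu.2.1
      exact (H w (D w)).mpr (Finset.Subset.refl _) u hu.2.2.2
  obtain ⟨u, hu, hum⟩ := exists_min_rep c T w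
  rw [indA_congr hu]
  exact key u ((H u T).mp hum)

lemma macaulay_of_shelling [Nonempty Φ] {c : Fin d → Φ → Y} {D : Φ → Finset (Fin d)}
    (H : IsShelling c D) (h : ℕ → ℚ)
    (hh : ∀ j, (Nat.card {w // (D w).card = j} : ℚ) = if j ≤ d then h j else 0) :
    IsMacaulayVector d h := by
  classical
  let b : Module.Basis Φ ℚ (Φ → ℚ) :=
    basisOfLinearIndependentOfCardEqFinrank (indA_linInd H) (by simp)
  have hb : ∀ w, b w = indA c w (D w) := fun w => by simp [b]
  set deg : Φ → ℕ := fun w => (D w).card with hdeg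
  have hmono : ∀ i j, i ≤ j → filtW deg b i ≤ filtW deg b j := by
    intro i j hij x hx φ hφ
    exact hx φ (by omega)
  have hspan : ∀ T w, indA c w T ∈ filtW deg b T.card := by
    intro T w
    refine Submodule.span_le.mpr ?_ (indA_mem_span H T w)
    rintro _ ⟨u, hu, rfl⟩
    change indA c u (D u) ∈ _
    rw [← hb]
    intro φ hφ
    rw [Module.Basis.repr_self, Finsupp.single_apply, if_neg]
    rintro rfl
    exact absurd (Finset.card_le_card hu) (not_le.mpr hφ)
  have hprod : ∀ w w' T T', indA c w T * indA c w' T' ∈ filtW deg b (T.card + T'.card) := by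
    intro w w' T T'
    by_cases hex : ∃ u, Agree c T w u ∧ Agree c T' w' u
    · obtain ⟨u, hu, hu'⟩ := hex
      rw [indA_congr hu, indA_congr hu']
      have : indA c u T * indA c u T' = indA c u (T ∪ T') := by
        funext x
        have h1 : Agree c (T ∪ T') u x ↔ Agree c T u x ∧ Agree c T' u x := by
          unfold Agree
          simp only [Finset.mem_union]
          constructor
          · exact fun h => ⟨fun r hr => h r (Or.inl hr), fun r hr => h r (Or.inr hr)⟩
          · rintro ⟨h1, h2⟩ r (hr | hr)
            exacts [h1 r hr, h2 r hr]
        simp only [Pi.mul_apply, indA, h1]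
        by_cases h2 : Agree c T u x <;> by_cases h3 : Agree c T' u x <;> simp [h2, h3]
      rw [this]
      exact hmono _ _ (Finset.card_union_le T T') (hspan _ u)
    · have : indA c w T * indA c w' T' = 0 := by
        funext x
        simp only [Pi.mul_apply, indA, Pi.zero_apply]
        by_cases h2 : Agree c T w x
        · have h3 : ¬ Agree c T' w' x := fun h3 => hex ⟨x, h2, h3⟩
          simp [h3]
        · simp [h2]
      rw [this]
      exact Submodule.zero_mem _
  refine macaulay_of_filtered (V := Φ × Fin d) deg b (fun p => indA c p.1 {p.2}) ?_ ?_ ?_ ?_ d h hh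
  · intro v
    simpa using hspan {v.2} v.1
  · have := hspan ∅ (Classical.arbitrary Φ)
    have h2 : indA c (Classical.arbitrary Φ) ∅ = 1 := by
      funext x
      simp [indA, Agree]
    rw [h2] at this
    simpa using this
  · intro i j x y hx hy
    rw [← b.sum_repr x, ← b.sum_repr y, Finset.sum_mul_sum]
    refine Submodule.sum_mem _ fun u _ => Submodule.sum_mem _ fun v _ => ?_
    rw [smul_mul_smul_comm]
    by_cases hu : i < deg u
    · rw [hx u hu, zero_mul, zero_smul]; exact Submodule.zero_mem _
    by_cases hv : j < deg v
    · rw [hy v hv, mul_zero, zero_smul]; exact Submodule.zero_mem _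
    refine Submodule.smul_mem _ _ ?_
    rw [hb, hb]
    refine hmono _ _ ?_ (hprod u v (D u) (D v))
    exact Nat.add_le_add (not_lt.mp hu) (not_lt.mp hv)
  · intro w
    refine ⟨∏ r ∈ D w, MvPolynomial.X (w, r), ?_, ?_⟩
    · have := MvPolynomial.IsHomogeneous.prod (D w)
        (fun r => (MvPolynomial.X (w, r) : MvPolynomial (Φ × Fin d) ℚ)) (fun _ => 1)
        (fun r _ => MvPolynomial.isHomogeneous_X ℚ (w, r))
      simpa using this
    · rw [map_prod, hb]
      funext x
      simp only [MvPolynomial.aeval_X, Finset.prod_apply]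
      by_cases hx : Agree c (D w) w x
      · rw [Finset.prod_eq_one]
        · simp [indA, hx]
        · intro r hr
          have := hx r hr
          simp [indA, Agree, this]
      · have : ∃ r ∈ D w, c r w ≠ c r x := by
          unfold Agree at hx
          push Not at hx
          exact hx
        obtain ⟨r, hr, hne⟩ := this
        rw [Finset.prod_eq_zero hr]
        · simp [indA, hx]
        · simp [indA, Agree, hne]

end PartTwo

/-! ### Part 3: the order complex of the independent vectors of a discrete polymatroid -/

section PartThree

set_option linter.unusedSectionVars false

variable {ι : Type} [Fintype ι] [LinearOrder ι]

lemma exists_descent {K : Type} [LinearOrder K] (key : ι → K) (m : List ι)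
    (h : ¬ m.Pairwise (fun a b => key a ≤ key b)) :
    ∃ m1 x y m2, m = m1 ++ x :: y :: m2 ∧ key y < key x := by
  induction m with
  | nil => simp at h
  | cons a m ih =>
    by_cases hm : m.Pairwise (fun a b => key a ≤ key b)
    · cases m with
      | nil => simp at h
      | cons b m =>
        by_cases hab : key b < key a
        · exact ⟨[], a, b, m, rfl, hab⟩
        · exfalso
          apply h
          rw [List.pairwise_cons]
          refine ⟨?_, hm⟩
          intro z hz
          have h1 : key a ≤ key b := not_lt.mp hab
          rcases List.mem_cons.mp hz with rfl | hz
          · exact h1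
          · exact h1.trans ((List.pairwise_cons.mp hm).1 z hz)
    · obtain ⟨m1, x, y, m2, rfl, hxy⟩ := ih hm
      exact ⟨a :: m1, x, y, m2, rfl, hxy⟩

lemma swap_lt {K : Type} [LinearOrder K] (l1 : List K) (x y : K) (l2 l3 : List K) (h : y < x) :
    l1 ++ y :: l2 < l1 ++ x :: l3 := by
  induction l1 with
  | nil => simpa [List.cons_lt_cons_iff] using Or.inl h
  | cons a l1 ih => simpa [List.cons_lt_cons_iff] using ih

lemma lex_descent {K : Type} [LinearOrder K] (key : ι → K) (hkey : Function.Injective key)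
    (l l' : List ι) (hp : l.Perm l') (hlt : l'.map key < l.map key) :
    ∃ l1 x y l2, l = l1 ++ x :: y :: l2 ∧ key y < key x ∧
      ¬ (l.take (l1.length + 1)).Perm (l'.take (l1.length + 1)) := by
  induction l generalizing l' with
  | nil =>
    have : l' = [] := List.nil_perm.mp hp
    subst this
    exact absurd hlt (lt_irrefl _)
  | cons a l ih =>
    cases l' with
    | nil => exact absurd hp (by simp)
    | cons a' l' =>
      rw [List.map_cons, List.map_cons, List.cons_lt_cons_iff] at hlt
      rcases hlt with hlt | ⟨heq, hlt⟩
      · classical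
        have hex : ∃ s, 1 ≤ s ∧ ((a :: l).take s).Perm ((a' :: l').take s) := by
          refine ⟨(a :: l).length, by simp, ?_⟩
          rw [List.take_length, List.take_of_length_le (by rw [hp.length_eq])]
          exact hp
        obtain ⟨hs1, hs2⟩ := Nat.find_spec hex
        have hmin := fun r => Nat.find_min hex (m := r)
        set s := Nat.find hex
        have hns : ¬ ((a :: l).take s).Pairwise (fun a b => key a ≤ key b) := by
          intro hsorted
          obtain ⟨t, ht⟩ : ∃ t, s = t + 1 := ⟨s - 1, by omega⟩
          have h1 : a' ∈ (a :: l).take s := by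
            rw [hs2.mem_iff, ht]; simp
          rw [ht, List.take_succ_cons] at hsorted h1
          rcases List.mem_cons.mp h1 with h2 | h2
          · rw [h2] at hlt; exact lt_irrefl _ hlt
          · exact absurd ((List.pairwise_cons.mp hsorted).1 a' h2) (not_le.mpr hlt)
        obtain ⟨m1, x, y, m2, hm, hxy⟩ := exists_descent key _ hns
        refine ⟨m1, x, y, m2 ++ (a :: l).drop s, ?_, hxy, ?_⟩
        · conv_lhs => rw [← List.take_append_drop s (a :: l), hm]
          simp
        · intro hperm
          refine hmin (m1.length + 1) ?_ ⟨by omega, hperm⟩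
          have := congrArg List.length hm
          rw [List.length_take] at this
          simp only [List.length_append, List.length_cons] at this
          omega
      · have hae := hkey heq
        subst hae
        obtain ⟨l1, x, y, l2, rfl, hxy, hnp⟩ := ih l' (List.Perm.cons_inv hp) hlt
        refine ⟨a' :: l1, x, y, l2, rfl, hxy, ?_⟩
        intro hperm
        apply hnp
        simpa using hperm

/-- The content of a word. -/
def wcont (l : List ι) : ι → ℕ := fun i => l.count i

lemma wcont_eq_iff {l l' : List ι} : wcont l = wcont l' ↔ l.Perm l' := by
  rw [List.perm_iff_count]
  exact funext_iff

lemma sum_wcont (l : List ι) : ∑ i, wcont l i = l.length := by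
  unfold wcont
  have := Multiset.sum_count_eq_card (s := Finset.univ) (m := (l : Multiset ι)) (by simp)
  simpa using this

/-- Axioms of the set of independent vectors of a discrete polymatroid of rank `d`. -/
structure PolyM (P : Set (ι → ℕ)) (d : ℕ) : Prop where
  down : ∀ u v, v ∈ P → u ≤ v → u ∈ P
  le : ∀ v ∈ P, ∑ i, v i ≤ d
  base : ∃ b ∈ P, ∑ i, b i = d
  exch : ∀ b ∈ P, ∑ i, b i = d → ∀ v ∈ P, ∀ j, b j < v j →
    ∃ i, v i < b i ∧ ∃ b' ∈ P, b' + Pi.single i 1 = b + Pi.single j 1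

/-- internally passive letters -/
def passive (P : Set (ι → ℕ)) (b : ι → ℕ) (i : ι) : Prop :=
  ∃ j < i, ∃ b' ∈ P, b' + Pi.single i 1 = b + Pi.single j 1

open Classical in
/-- the ordering of the letters attached to a base -/
noncomputable def keyOf (P : Set (ι → ℕ)) (b : ι → ℕ) (i : ι) : Bool ×ₗ ι :=
  toLex (decide (passive P b i), i)

lemma keyOf_inj (P : Set (ι → ℕ)) (b : ι → ℕ) : Function.Injective (keyOf P b) := by
  intro i j h
  have := congrArg (fun z => (ofLex z).2) h
  simpa [keyOf] using this

/-- Maximal chains, encoded as words. -/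
@[ext]
structure Words (P : Set (ι → ℕ)) (d : ℕ) : Type where
  /-- the word -/
  val : List ι
  mem : wcont val ∈ P
  len : val.length = d

/-- the invariant by which the words are ordered -/
noncomputable def wordKey (P : Set (ι → ℕ)) (d : ℕ) (w : Words P d) :
    (Lex (ι → ℕ))ᵒᵈ ×ₗ List (Bool ×ₗ ι) :=
  toLex (OrderDual.toDual (toLex (wcont w.1)), w.1.map (keyOf P (wcont w.1)))

lemma wordKey_inj (P : Set (ι → ℕ)) (d : ℕ) : Function.Injective (wordKey P d) := by
  intro w w' h
  have h1 : wcont w.1 = wcont w'.1 := by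
    have := congrArg (fun z => ofLex (OrderDual.ofDual (ofLex z).1)) h
    exact this
  have h2 : w.1.map (keyOf P (wcont w.1)) = w'.1.map (keyOf P (wcont w'.1)) :=
    congrArg (fun z => (ofLex z).2) h
  rw [← h1] at h2
  exact Words.ext (List.map_injective_iff.mpr (keyOf_inj P _) h2)

noncomputable instance (P : Set (ι → ℕ)) (d : ℕ) : LinearOrder (Words P d) :=
  LinearOrder.lift' (wordKey P d) (wordKey_inj P d)

lemma words_lt_iff {P : Set (ι → ℕ)} {d : ℕ} (w w' : Words P d) :
    w < w' ↔ toLex (wcont w'.1) < toLex (wcont w.1) ∨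
      (wcont w.1 = wcont w'.1 ∧
        w.1.map (keyOf P (wcont w.1)) < w'.1.map (keyOf P (wcont w'.1))) := by
  change wordKey P d w < wordKey P d w' ↔ _
  unfold wordKey
  rw [Prod.Lex.toLex_lt_toLex]
  simp only [OrderDual.toDual_lt_toDual]
  rfl

noncomputable instance (P : Set (ι → ℕ)) (d : ℕ) : Fintype (Words P d) := by
  have h : Finite {l : List ι // l.length = d} := List.finite_length_eq ι d
  have : Finite (Words P d) := Finite.of_injective
    (fun w : Words P d => (⟨w.1, w.len⟩ : {l : List ι // l.length = d})) (by
      intro a b hab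
      exact Words.ext (congrArg (fun z : {l : List ι // l.length = d} => z.1) hab))
  exact Fintype.ofFinite _

/-- vertices of the chain of a word -/
def chainC (P : Set (ι → ℕ)) (d : ℕ) (r : Fin d) (w : Words P d) : ι → ℕ :=
  wcont (w.1.take (r + 1))

open Classical in
/-- the restriction set of the shelling -/
noncomputable def descW (P : Set (ι → ℕ)) (d : ℕ) (w : Words P d) : Finset (Fin d) :=
  Finset.univ.filter fun r => ∃ w' < w, Agree (chainC P d) (Finset.univ.erase r) w w'

lemma mem_descW {P : Set (ι → ℕ)} {d : ℕ} {w : Words P d} {r : Fin d} :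
    r ∈ descW P d w ↔ ∃ w' < w, Agree (chainC P d) (Finset.univ.erase r) w w' := by
  simp [descW]

/-- A descent in the word gives an element of the restriction set. -/
lemma desc_of_swap {P : Set (ι → ℕ)} {d : ℕ} (w : Words P d) (l1 : List ι) (x y : ι) (l2 : List ι)
    (h : w.1 = l1 ++ x :: y :: l2) (hxy : keyOf P (wcont w.1) y < keyOf P (wcont w.1) x) :
    ∃ hr : l1.length < d, (⟨l1.length, hr⟩ : Fin d) ∈ descW P d w := by
  have hlen := w.len
  have hr : l1.length < d := by
    rw [← hlen, h]; simp
  refine ⟨hr, mem_descW.mpr ?_⟩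
  have hperm : (l1 ++ y :: x :: l2).Perm w.1 := by
    rw [h]
    exact (List.Perm.swap x y l2).append_left l1
  have hc : wcont (l1 ++ y :: x :: l2) = wcont w.1 := wcont_eq_iff.mpr hperm
  refine ⟨⟨l1 ++ y :: x :: l2, by rw [hc]; exact w.mem, by rw [hperm.length_eq]; exact hlen⟩, ?_, ?_⟩
  · rw [words_lt_iff]
    right
    refine ⟨hc, ?_⟩
    simp only [hc]
    rw [List.map_append, List.map_cons]
    have h2 : w.1.map (keyOf P (wcont w.1)) = l1.map (keyOf P (wcont w.1)) ++
        keyOf P (wcont w.1) x :: (y :: l2).map (keyOf P (wcont w.1)) := by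
      generalize keyOf P (wcont w.1) = g
      rw [h]; simp
    rw [h2]
    exact swap_lt _ _ _ _ _ hxy
  · intro r hr'
    have hne : (r : ℕ) ≠ l1.length := by
      intro h2
      rw [Finset.mem_erase] at hr'
      exact hr'.1 (Fin.ext h2)
    unfold chainC
    rw [wcont_eq_iff]
    change (List.take (r + 1) w.1).Perm (List.take (r + 1) (l1 ++ y :: x :: l2))
    rw [h]
    change (List.take (r + 1) (l1 ++ x :: y :: l2)).Perm (List.take (r + 1) (l1 ++ y :: x :: l2))
    rcases lt_or_gt_of_ne hne with h2 | h2
    · rw [List.take_append_of_le_length (by omega), List.take_append_of_le_length (by omega)]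
    · rw [List.take_append, List.take_append]
      refine List.Perm.append_left _ ?_
      obtain ⟨t, ht⟩ : ∃ t, (r : ℕ) + 1 - l1.length = t + 2 := ⟨r - l1.length - 1, by omega⟩
      rw [ht]
      simp only [List.take_succ_cons]
      exact List.Perm.swap y x _

lemma wcont_append (l l' : List ι) : wcont (l ++ l') = wcont l + wcont l' := by
  funext i
  simp [wcont]

lemma wcont_singleton (i : ι) : wcont [i] = Pi.single i 1 := by
  funext j
  by_cases h : i = j
  · subst h; simp [wcont]
  · simp [wcont, h, Ne.symm h]

lemma exists_desc_ne {P : Set (ι → ℕ)} {d : ℕ} (hP : PolyM P d) (w w' : Words P d) (hlt : w' < w) :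
    ∃ r ∈ descW P d w, chainC P d r w ≠ chainC P d r w' := by
  classical
  have hd : w.1.length = d := w.len
  have hd' : w'.1.length = d := w'.len
  rw [words_lt_iff] at hlt
  rcases hlt with hlt | ⟨hc, hlt⟩
  · -- different bases
    obtain ⟨j, hj1, hj2⟩ := hlt
    have hj1' : ∀ x < j, wcont w.1 x = wcont w'.1 x := hj1
    have hj2' : wcont w.1 j < wcont w'.1 j := hj2
    obtain ⟨i, hi, b', hb', hbe⟩ := hP.exch (wcont w.1) w.mem (by rw [sum_wcont, hd])
      (wcont w'.1) w'.mem j hj2'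
    have hij : j < i := by
      rcases lt_trichotomy i j with h | h | h
      · rw [hj1' i h] at hi; exact absurd hi (lt_irrefl _)
      · subst h; omega
      · exact h
    have hpi : passive P (wcont w.1) i := ⟨j, hij, b', hb', hbe⟩
    -- last common initial part
    let Q : ℕ → Prop := fun s => wcont (w.1.take s) = wcont (w'.1.take s)
    have hQ0 : Q 0 := by simp [Q]
    set s := Nat.findGreatest Q d with hs
    have hQs : Q s := Nat.findGreatest_spec (P := Q) (Nat.zero_le d) hQ0
    have hQgt : ∀ t, s < t → t ≤ d → ¬ Q t := fun t h1 h2 =>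
      Nat.findGreatest_is_greatest h1 h2
    have hnQd : ¬ Q d := by
      intro h
      simp only [Q] at h
      rw [List.take_of_length_le (by omega), List.take_of_length_le (by omega)] at h
      rw [h] at hi
      exact lt_irrefl _ hi
    have hsd : s < d := by
      have : s ≤ d := Nat.findGreatest_le d
      rcases Nat.lt_or_ge s d with h | h
      · exact h
      · have h3 : s = d := by omega
        rw [h3] at hQs
        exact absurd hQs hnQd
    -- the letter i occurs after position s
    have himem : i ∈ w.1.drop s := by
      by_contra hnot
      have h1 : wcont w.1 i = wcont (w.1.take s) i := by
        conv_lhs => rw [← List.take_append_drop s w.1]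
        rw [wcont_append, Pi.add_apply]
        have : wcont (w.1.drop s) i = 0 := List.count_eq_zero_of_not_mem hnot
        omega
      have h2 : wcont (w'.1.take s) i ≤ wcont w'.1 i :=
        (List.take_sublist s w'.1).count_le i
      have h3 : wcont (w.1.take s) i = wcont (w'.1.take s) i := congrFun hQs i
      omega
    have hne : w.1.drop s ≠ [] := List.ne_nil_of_mem himem
    set z := (w.1.drop s).getLast hne with hz
    have hwz : w.1 = w.1.take s ++ (w.1.drop s).dropLast ++ [z] := by
      conv_lhs => rw [← List.take_append_drop s w.1, ← List.dropLast_append_getLast hne]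
      rw [List.append_assoc]
    by_cases hzp : passive P (wcont w.1) z
    · obtain ⟨j', hj', b'', hb'', hbe'⟩ := hzp
      set l0 := w.1.take s ++ (w.1.drop s).dropLast with hl0
      have hl0len : l0.length + 1 = d := by
        have := congrArg List.length hwz
        rw [List.length_append, hd] at this
        simpa using this.symm
      have hcw : wcont w.1 = wcont l0 + Pi.single z 1 := by
        conv_lhs => rw [hwz]
        rw [wcont_append, wcont_singleton]
      have hb2 : b'' = wcont (l0 ++ [j']) := by
        rw [wcont_append, wcont_singleton]
        rw [hcw, add_right_comm] at hbe'
        exact add_right_cancel hbe'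
      have hd0 : d - 1 < d := by omega
      refine ⟨⟨d - 1, hd0⟩, mem_descW.mpr ⟨⟨l0 ++ [j'], by rw [← hb2]; exact hb'', by simpa using hl0len⟩,
        ?_, ?_⟩, ?_⟩
      · rw [words_lt_iff]
        left
        refine ⟨j', ?_, ?_⟩
        · intro x hx
          change wcont w.1 x = wcont (l0 ++ [j']) x
          rw [hcw, wcont_append l0, wcont_singleton]
          simp [Pi.single_apply, hx.ne, (hx.trans hj').ne]
        · change wcont w.1 j' < wcont (l0 ++ [j']) j'
          rw [hcw, wcont_append l0, wcont_singleton]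
          simp [Pi.single_apply, hj'.ne]
      · intro r hr
        rw [Finset.mem_erase] at hr
        have hrd : (r : ℕ) + 1 ≤ l0.length := by
          have h1 := r.2
          have h2 : (r : ℕ) ≠ d - 1 := fun h => hr.1 (Fin.ext h)
          omega
        change wcont (List.take (r + 1) w.1) = wcont (List.take (r + 1) (l0 ++ [j']))
        rw [hwz]
        change wcont (List.take (r + 1) (l0 ++ [z])) = wcont (List.take (r + 1) (l0 ++ [j']))
        rw [List.take_append_of_le_length hrd, List.take_append_of_le_length hrd]
      · intro h
        apply hnQd
        unfold chainC at h
        have h3 : d - 1 + 1 = d := by omega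
        simp only [h3] at h
        exact h
    · have hkey : keyOf P (wcont w.1) z < keyOf P (wcont w.1) i := by
        unfold keyOf
        rw [Prod.Lex.toLex_lt_toLex]
        left
        simp [hzp, hpi]
      have hns : ¬ (w.1.drop s).Pairwise
          (fun a b => keyOf P (wcont w.1) a ≤ keyOf P (wcont w.1) b) := by
        intro hsort
        rw [← List.dropLast_append_getLast hne] at hsort himem
        rw [List.pairwise_append] at hsort
        rcases List.mem_append.mp himem with h | h
        · exact absurd (hsort.2.2 i h z (by simp [hz])) (not_le.mpr hkey)
        · have : i = z := by simpa [hz] using h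
          rw [this] at hkey
          exact lt_irrefl _ hkey
      obtain ⟨m1, x, y, m2, hm, hxy⟩ := exists_descent _ _ hns
      have hw1 : w.1 = (w.1.take s ++ m1) ++ x :: y :: m2 := by
        conv_lhs => rw [← List.take_append_drop s w.1, hm]
        rw [List.append_assoc]
      obtain ⟨hr, hmem⟩ := desc_of_swap w (w.1.take s ++ m1) x y m2 hw1 hxy
      refine ⟨_, hmem, ?_⟩
      unfold chainC
      refine hQgt _ ?_ hr
      change s < (w.1.take s ++ m1).length + 1
      rw [List.length_append, List.length_take]
      omega
  · -- same base
    have hperm : w.1.Perm w'.1 := wcont_eq_iff.mp hc.symm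
    rw [hc] at hlt
    obtain ⟨l1, x, y, l2, hl, hxy, hnp⟩ := lex_descent _ (keyOf_inj P (wcont w.1)) w.1 w'.1 hperm hlt
    obtain ⟨hr, hmem⟩ := desc_of_swap w l1 x y l2 hl hxy
    refine ⟨_, hmem, ?_⟩
    unfold chainC
    rw [Ne, wcont_eq_iff]
    exact hnp

lemma words_shelling {P : Set (ι → ℕ)} {d : ℕ} (hP : PolyM P d) :
    IsShelling (chainC P d) (descW P d) := by
  intro w T
  constructor
  · intro h r hr
    by_contra hrT
    obtain ⟨w', hlt, hag⟩ := mem_descW.mp hr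
    refine absurd (h w' ?_) (not_le.mpr hlt)
    intro r' hr'
    refine hag r' (Finset.mem_erase.mpr ⟨?_, Finset.mem_univ _⟩)
    rintro rfl
    exact hrT hr'
  · intro h w' hag
    by_contra hlt
    obtain ⟨r, hr, hne⟩ := exists_desc_ne hP w w' (not_le.mp hlt)
    exact hne (hag r (h hr))

end PartThree

/-! ### Part 4: counting multichains -/

section PartFour

set_option linter.unusedSectionVars false

variable {ι : Type} [Fintype ι] [LinearOrder ι]

/-- product of multichoose numbers -/
def gq (q : ℕ) (v : ι → ℕ) : ℕ := ∏ i, Nat.multichoose q (v i)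

lemma sum_multichoose (q n : ℕ) :
    ∑ a ∈ Finset.Icc 0 n, Nat.multichoose q a = Nat.multichoose (q + 1) n := by
  induction n with
  | zero => simp
  | succ n ih =>
    rw [← Finset.insert_Icc_right_eq_Icc_add_one (by omega), Finset.sum_insert (by simp), ih,
      Nat.multichoose_succ_succ]

lemma gq_succ (q : ℕ) (v : ι → ℕ) : ∑ w ∈ Finset.Icc 0 v, gq q w = gq (q + 1) v := by
  unfold gq
  rw [Pi.Icc_eq, ← Finset.prod_univ_sum]
  refine Finset.prod_congr rfl fun i _ => ?_
  exact sum_multichoose q (v i)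

/-- weakly decreasing lists below `v` -/
def mlist : ℕ → (ι → ℕ) → Finset (List (ι → ℕ))
  | 0, _ => {[]}
  | q + 1, v => (Finset.Icc 0 v).biUnion fun w => (mlist q w).image (List.cons w)

lemma mem_mlist (q : ℕ) (v : ι → ℕ) (l : List (ι → ℕ)) :
    l ∈ mlist q v ↔ l.length = q ∧ l.Pairwise (fun a b => b ≤ a) ∧ ∀ a ∈ l, a ≤ v := by
  induction q generalizing v l with
  | zero =>
    simp only [mlist, Finset.mem_singleton, List.length_eq_zero_iff]
    constructor
    · rintro rfl; simp
    · exact fun h => h.1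
  | succ q ih =>
    simp only [mlist, Finset.mem_biUnion, Finset.mem_image, Finset.mem_Icc]
    constructor
    · rintro ⟨w, ⟨-, hw⟩, l', hl', rfl⟩
      obtain ⟨h1, h2, h3⟩ := (ih w l').mp hl'
      refine ⟨by simp [h1], List.pairwise_cons.mpr ⟨h3, h2⟩, ?_⟩
      intro a ha
      rcases List.mem_cons.mp ha with rfl | ha
      · exact hw
      · exact (h3 a ha).trans hw
    · rintro ⟨h1, h2, h3⟩
      cases l with
      | nil => simp at h1
      | cons w l' =>
        refine ⟨w, ⟨fun i => Nat.zero_le _, h3 w (by simp)⟩, l', ?_, rfl⟩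
        rw [ih]
        exact ⟨by simpa using h1, (List.pairwise_cons.mp h2).2, (List.pairwise_cons.mp h2).1⟩

lemma card_cons_biUnion (A : Finset (ι → ℕ)) (q : ℕ) :
    (A.biUnion fun w => (mlist q w).image (List.cons w)).card = ∑ w ∈ A, (mlist q w).card := by
  rw [Finset.card_biUnion]
  · refine Finset.sum_congr rfl fun w _ => ?_
    exact Finset.card_image_of_injective _ (List.cons_injective)
  · intro a _ b _ hab
    change Disjoint _ _
    rw [Finset.disjoint_left]
    intro l h1 h2
    obtain ⟨l1, _, rfl⟩ := Finset.mem_image.mp h1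
    obtain ⟨l2, _, h⟩ := Finset.mem_image.mp h2
    exact hab (List.cons.inj h).1.symm

lemma card_mlist (q : ℕ) (v : ι → ℕ) : (mlist q v).card = gq (q + 1) v := by
  induction q generalizing v with
  | zero => simp [mlist, gq]
  | succ q ih =>
    rw [mlist, card_cons_biUnion, ← gq_succ]
    exact Finset.sum_congr rfl fun w _ => ih w

/-- weakly decreasing lists in a finite set -/
def plist (A : Finset (ι → ℕ)) : ℕ → Finset (List (ι → ℕ))
  | 0 => {[]}
  | q + 1 => A.biUnion fun w => (mlist q w).image (List.cons w)

lemma card_plist (A : Finset (ι → ℕ)) (h0 : (0 : ι → ℕ) ∈ A) (q : ℕ) :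
    (plist A q).card = ∑ v ∈ A, gq q v := by
  cases q with
  | zero =>
    rw [plist, Finset.card_singleton, Finset.sum_eq_single (0 : ι → ℕ)]
    · simp [gq]
    · intro v _ hv
      obtain ⟨i, hi⟩ := Function.ne_iff.mp hv
      refine Finset.prod_eq_zero (Finset.mem_univ i) ?_
      obtain ⟨t, ht⟩ := Nat.exists_eq_succ_of_ne_zero hi
      rw [ht]; simp
    · exact fun h => absurd h0 h
  | succ q =>
    rw [plist, card_cons_biUnion]
    exact Finset.sum_congr rfl fun w _ => card_mlist q w

lemma mem_plist (A : Finset (ι → ℕ)) (hA : ∀ u v, v ∈ A → u ≤ v → u ∈ A) (q : ℕ)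
    (l : List (ι → ℕ)) :
    l ∈ plist A q ↔ l.length = q ∧ l.Pairwise (fun a b => b ≤ a) ∧ ∀ a ∈ l, a ∈ A := by
  cases q with
  | zero =>
    simp only [plist, Finset.mem_singleton, List.length_eq_zero_iff]
    constructor
    · rintro rfl; simp
    · exact fun h => h.1
  | succ q =>
    simp only [plist, Finset.mem_biUnion, Finset.mem_image]
    constructor
    · rintro ⟨w, hw, l', hl', rfl⟩
      obtain ⟨h1, h2, h3⟩ := (mem_mlist q w l').mp hl'
      refine ⟨by simp [h1], List.pairwise_cons.mpr ⟨h3, h2⟩, ?_⟩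
      intro a ha
      rcases List.mem_cons.mp ha with rfl | ha
      · exact hw
      · exact hA _ _ hw (h3 a ha)
    · rintro ⟨h1, h2, h3⟩
      cases l with
      | nil => simp at h1
      | cons w l' =>
        refine ⟨w, h3 w (by simp), l', ?_, rfl⟩
        rw [mem_mlist]
        exact ⟨by simpa using h1, (List.pairwise_cons.mp h2).2, (List.pairwise_cons.mp h2).1⟩

lemma exists_wcont (v : ι → ℕ) : ∃ l : List ι, wcont l = v := by
  refine ⟨(∑ i, Multiset.replicate (v i) i).toList, ?_⟩
  funext j
  unfold wcont
  rw [← Multiset.coe_count, Multiset.coe_toList, Multiset.count_sum']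
  simp [Multiset.count_replicate]

lemma exists_word_list (x : List (ι → ℕ)) (hx : x.Pairwise (fun a b => b ≤ a)) (v : ι → ℕ)
    (hv : ∀ a ∈ x, a ≤ v) :
    ∃ l : List ι, wcont l = v ∧ ∀ a ∈ x, wcont (l.take (∑ i, a i)) = a := by
  induction x generalizing v with
  | nil =>
    obtain ⟨l, hl⟩ := exists_wcont v
    exact ⟨l, hl, by simp⟩
  | cons a x ih =>
    obtain ⟨h1, h2⟩ := List.pairwise_cons.mp hx
    obtain ⟨l, hl, hlx⟩ := ih h2 a h1
    obtain ⟨l', hl'⟩ := exists_wcont (v - a)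
    have hav : a ≤ v := hv a (by simp)
    have hlen : l.length = ∑ i, a i := by rw [← sum_wcont, hl]
    refine ⟨l ++ l', ?_, ?_⟩
    · rw [wcont_append, hl, hl']
      exact add_tsub_cancel_of_le hav
    · intro b hb
      have hba : b ≤ a := by
        rcases List.mem_cons.mp hb with rfl | hb
        · exact le_rfl
        · exact h1 b hb
      rw [List.take_append_of_le_length (by rw [hlen]; exact Finset.sum_le_sum fun i _ => hba i)]
      rcases List.mem_cons.mp hb with rfl | hb
      · rw [List.take_of_length_le (by rw [hlen]), hl]
      · exact hlx b hb

lemma sum_exch {b b' : ι → ℕ} {i j : ι} (h : b' + Pi.single i 1 = b + Pi.single j 1) :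
    ∑ l, b' l = ∑ l, b l := by
  have h1 := congrArg (fun f : ι → ℕ => ∑ l, f l) h
  simp only [Pi.add_apply, Finset.sum_add_distrib, Finset.sum_pi_single', Finset.mem_univ,
    if_true] at h1
  simpa [Finset.sum_pi_single'] using h1

lemma exists_base_ge {P : Set (ι → ℕ)} {d : ℕ} (hP : PolyM P d) (v : ι → ℕ) (hv : v ∈ P) :
    ∃ b ∈ P, ∑ i, b i = d ∧ v ≤ b := by
  suffices H : ∀ n, ∀ b ∈ P, ∑ i, b i = d → ∑ i, (v i - b i) = n → ∃ b ∈ P, ∑ i, b i = d ∧ v ≤ b by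
    obtain ⟨b, hb, hbd⟩ := hP.base
    exact H _ b hb hbd rfl
  intro n
  induction n using Nat.strong_induction_on with
  | _ n ih =>
    intro b hb hbd hn
    by_cases hvb : v ≤ b
    · exact ⟨b, hb, hbd, hvb⟩
    · obtain ⟨j, hj⟩ : ∃ j, b j < v j := by
        by_contra hcon
        push Not at hcon
        exact hvb hcon
      obtain ⟨i, hi, b', hb', hbe⟩ := hP.exch b hb hbd v hv j hj
      have hij : i ≠ j := by rintro rfl; omega
      refine ih _ ?_ b' hb' ((sum_exch hbe).trans hbd) rfl
      rw [← hn]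
      have hval : ∀ l, b' l + (if l = i then 1 else 0) = b l + (if l = j then 1 else 0) := by
        intro l
        have := congrFun hbe l
        simpa [Pi.single_apply] using this
      refine Finset.sum_lt_sum (fun l _ => ?_) ⟨j, Finset.mem_univ _, ?_⟩
      · have := hval l
        by_cases h1 : l = i
        · subst h1; simp [hij] at this; omega
        · simp only [h1, if_false] at this; split_ifs at this <;> omega
      · have := hval j
        simp [hij.symm] at this; omega

lemma exists_word {P : Set (ι → ℕ)} {d : ℕ} (hP : PolyM P d) (x : List (ι → ℕ))
    (hx : x.Pairwise (fun a b => b ≤ a)) (hxP : ∀ a ∈ x, a ∈ P) :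
    ∃ w : Words P d, ∀ a ∈ x, wcont (w.1.take (∑ i, a i)) = a := by
  obtain ⟨b, hb, hbd, hxb⟩ : ∃ b ∈ P, ∑ i, b i = d ∧ ∀ a ∈ x, a ≤ b := by
    cases x with
    | nil => obtain ⟨b, hb, h⟩ := hP.base; exact ⟨b, hb, h, by simp⟩
    | cons a x =>
      obtain ⟨b, hb, h, hab⟩ := exists_base_ge hP a (hxP a (by simp))
      refine ⟨b, hb, h, ?_⟩
      intro c hc
      rcases List.mem_cons.mp hc with rfl | hc
      · exact hab
      · exact ((List.pairwise_cons.mp hx).1 c hc).trans hab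
  obtain ⟨l, hl, hlx⟩ := exists_word_list x hx b hxb
  exact ⟨⟨l, by rw [hl]; exact hb, by rw [← sum_wcont, hl, hbd]⟩, hlx⟩

/-- counting multisets containing a given set -/
lemma card_sym_contain (d q : ℕ) (D : Finset (Fin d)) :
    (Finset.univ.filter fun s : Sym (Fin (d + 1)) q => ∀ r ∈ D, r.succ ∈ s).card =
      (q + d - D.card).choose d := by
  have hDd : D.card ≤ d := by simpa using Finset.card_le_univ D
  set D' : Finset (Fin (d + 1)) := D.map (Fin.succEmb d) with hD'
  have hcard : D'.card = D.card := Finset.card_map _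
  have hsub : ∀ s : Sym (Fin (d + 1)) q, (∀ r ∈ D, r.succ ∈ s) ↔ D'.val ≤ (s : Multiset (Fin (d + 1))) := by
    intro s
    rw [Multiset.le_iff_subset D'.nodup]
    constructor
    · intro h a ha
      obtain ⟨r, hr, rfl⟩ := Finset.mem_map.mp (Finset.mem_val.mp ha)
      exact h r hr
    · intro h r hr
      exact h (Finset.mem_val.mpr (Finset.mem_map.mpr ⟨r, hr, rfl⟩))
  simp only [hsub]
  rcases Nat.lt_or_ge q D.card with hq | hq
  · rw [Nat.choose_eq_zero_of_lt (by omega), Finset.card_eq_zero, Finset.filter_eq_empty_iff]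
    intro s _ hs
    have := Multiset.card_le_card hs
    have h2 : Multiset.card (s : Multiset (Fin (d + 1))) = q := s.2
    rw [Finset.card_val] at this
    omega
  · have h1 : (Finset.univ : Finset (Sym (Fin (d + 1)) (q - D.card))).card = (q + d - D.card).choose d := by
      rw [Finset.card_univ, Sym.card_sym_eq_multichoose, Fintype.card_fin, Nat.multichoose_eq]
      have : d + 1 + (q - D.card) - 1 = d + (q - D.card) := by omega
      rw [this, ← Nat.choose_symm_add]
      congr 1
      omega
    rw [← h1]
    symm
    refine Finset.card_bij (fun s _ => Sym.mk (D'.val + (s : Multiset (Fin (d + 1)))) (by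
      rw [Multiset.card_add, Sym.card_coe, Finset.card_val, hcard]; omega)) ?_ ?_ ?_
    · intro s _
      refine Finset.mem_filter.mpr ⟨Finset.mem_univ _, ?_⟩
      exact Multiset.le_add_right _ _
    · intro s _ t _ hst
      have := congrArg (fun z : Sym (Fin (d + 1)) q => z.1) hst
      exact Subtype.ext (add_left_cancel this)
    · intro t ht
      have ht' := (Finset.mem_filter.mp ht).2
      refine ⟨⟨t.1 - D'.val, ?_⟩, Finset.mem_univ _, ?_⟩
      · have := Multiset.card_sub ht'
        have h2 : Multiset.card t.1 = q := t.2
        change Multiset.card (t.1 - D'.val) = _ at this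
        rw [this, Finset.card_val, hcard]
        change Multiset.card t.1 - _ = _
        rw [h2]
      · apply Subtype.ext
        exact add_tsub_cancel_of_le ht'

lemma count_main {P : Set (ι → ℕ)} {d : ℕ} (hP : PolyM P d) (A : Finset (ι → ℕ))
    (hA : ∀ v, v ∈ A ↔ v ∈ P) (q : ℕ) :
    ∑ v ∈ A, gq q v = ∑ w : Words P d, (q + d - (descW P d w).card).choose d := by
  have hdown : ∀ u v, v ∈ A → u ≤ v → u ∈ A := by
    intro u v hv huv
    rw [hA] at *
    exact hP.down u v hv huv
  have h0 : (0 : ι → ℕ) ∈ A := by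
    obtain ⟨b, hb, _⟩ := hP.base
    exact hdown 0 b ((hA b).mpr hb) (fun i => Nat.zero_le _)
  have H := words_shelling hP
  rw [← card_plist A h0 q]
  simp only [← card_sym_contain d q]
  rw [← Finset.card_sigma]
  symm
  have hlen : ∀ (w : Words P d) (r : Fin (d + 1)), ∑ i, wcont (w.1.take r) i = r := by
    intro w r
    rw [sum_wcont, List.length_take, w.len]
    have := r.2
    omega
  have hrank : ∀ (w : Words P d) (s : Sym (Fin (d + 1)) q),
      ((((s.1.sort (fun a b => b ≤ a)).map fun r : Fin (d + 1) => wcont (w.1.take r)).map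
        fun a => ∑ i, a i) : Multiset ℕ) = s.1.map Fin.val := by
    intro w s
    rw [List.map_map]
    have h1 : ((fun a : ι → ℕ => ∑ i, a i) ∘ fun r : Fin (d + 1) => wcont (w.1.take r)) = Fin.val := by
      funext r; exact hlen w r
    rw [h1, ← Multiset.map_coe, Multiset.sort_eq]
  refine Finset.card_bij (fun z _ => (z.2.1.sort (fun a b => b ≤ a)).map
    fun r : Fin (d + 1) => wcont (z.1.1.take r)) ?_ ?_ ?_
  · rintro ⟨w, s⟩ _
    rw [mem_plist A hdown]
    refine ⟨?_, ?_, ?_⟩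
    · rw [List.length_map, Multiset.length_sort]; exact s.2
    · rw [List.pairwise_map]
      refine (Multiset.pairwise_sort s.1 (fun a b => b ≤ a)).imp ?_
      intro a b hba i
      exact ((List.take_sublist_take_left (l := w.1) (show (b : ℕ) ≤ a from hba)).count_le i)
    · intro a ha
      obtain ⟨r, _, rfl⟩ := List.mem_map.mp ha
      rw [hA]
      refine hP.down _ _ w.mem ?_
      intro i
      exact (List.take_sublist _ _).count_le i
  · rintro ⟨w, s⟩ h1 ⟨w', s'⟩ h2 heq
    simp only at heq
    have hs : s = s' := by
      have e1 := hrank w s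
      rw [heq, hrank w' s'] at e1
      exact Subtype.ext (Multiset.map_injective Fin.val_injective e1).symm
    subst hs
    simp only [Finset.mem_sigma, Finset.mem_filter, Finset.mem_univ, true_and] at h1 h2
    have hag : ∀ r : Fin d, r.succ ∈ s → chainC P d r w = chainC P d r w' := by
      intro r hr
      have := List.map_inj_left.mp heq r.succ ((Multiset.mem_sort _).mpr hr)
      simpa [chainC] using this
    have hT : ∀ r ∈ Finset.univ.filter (fun r : Fin d => r.succ ∈ s),
        chainC P d r w = chainC P d r w' := fun r hr => hag r (Finset.mem_filter.mp hr).2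
    have e1 := (H w (Finset.univ.filter (fun r : Fin d => r.succ ∈ s))).mpr
      (fun r hr => Finset.mem_filter.mpr ⟨Finset.mem_univ _, h1 r hr⟩) w' hT
    have e2 := (H w' (Finset.univ.filter (fun r : Fin d => r.succ ∈ s))).mpr
      (fun r hr => Finset.mem_filter.mpr ⟨Finset.mem_univ _, h2 r hr⟩) w
      (fun r hr => (hT r hr).symm)
    have : w = w' := le_antisymm e1 e2
    subst this
    rfl
  · intro x hx
    obtain ⟨hxq, hxs, hxA⟩ := (mem_plist A hdown q x).mp hx
    have hxP : ∀ a ∈ x, a ∈ P := fun a ha => (hA a).mp (hxA a ha)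
    obtain ⟨w0, hw0⟩ := exists_word hP x hxs hxP
    let rkf : (ι → ℕ) → Fin (d + 1) := fun a => Fin.ofNat (d + 1) (∑ i, a i)
    have hrkf : ∀ a ∈ x, ((rkf a : Fin (d + 1)) : ℕ) = ∑ i, a i := by
      intro a ha
      have := hP.le a (hxP a ha)
      change (∑ i, a i) % (d + 1) = _
      exact Nat.mod_eq_of_lt (by omega)
    let s : Sym (Fin (d + 1)) q := ⟨(x.map rkf : List (Fin (d + 1))), by simpa using hxq⟩
    have hsort : s.1.sort (fun a b => b ≤ a) = x.map rkf := by
      have hp : (x.map rkf).Pairwise (fun a b => b ≤ a) := by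
        rw [List.pairwise_map]
        refine List.Pairwise.imp_of_mem ?_ hxs
        intro a b ha hb hba
        change ((rkf b : Fin (d + 1)) : ℕ) ≤ rkf a
        rw [hrkf a ha, hrkf b hb]
        exact Finset.sum_le_sum fun i _ => hba i
      refine List.Perm.eq_of_pairwise' (r := fun a b : Fin (d + 1) => b ≤ a)
        (Multiset.pairwise_sort _ _) hp ?_
      rw [← Multiset.coe_eq_coe, Multiset.sort_eq]
    obtain ⟨w, hw, hmin⟩ := exists_min_rep (chainC P d)
      (Finset.univ.filter (fun r : Fin d => r.succ ∈ s)) w0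
    have hD := (H w _).mp hmin
    refine ⟨⟨w, s⟩, ?_, ?_⟩
    · simp only [Finset.mem_sigma, Finset.mem_filter, Finset.mem_univ, true_and]
      intro r hr
      exact (Finset.mem_filter.mp (hD hr)).2
    · simp only
      rw [hsort, List.map_map]
      conv_rhs => rw [← List.map_id x]
      refine List.map_congr_left ?_
      intro a ha
      change wcont (w.1.take (rkf a)) = a
      rw [hrkf a ha]
      rcases Nat.eq_zero_or_pos (∑ i, a i) with h | h
      · have := hw0 a ha
        rw [h] at this ⊢
        simpa using this
      · have hle := hP.le a (hxP a ha)
        have hr : (∑ i, a i) - 1 < d := by omega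
        have := hw ⟨(∑ i, a i) - 1, hr⟩ (by
          rw [Finset.mem_filter]
          refine ⟨Finset.mem_univ _, ?_⟩
          change _ ∈ (x.map rkf : List _)
          rw [List.mem_map]
          refine ⟨a, ha, ?_⟩
          apply Fin.ext
          rw [hrkf a ha]
          simp; omega)
        unfold chainC at this
        have h3 : (∑ i, a i) - 1 + 1 = ∑ i, a i := by omega
        simp only [h3] at this
        rw [← this]
        exact hw0 a ha

end PartFour
/-! ### Part 5: the polymatroid of an intersecting submodular function -/

section PartFive

set_option linter.unusedSectionVars false

variable {ι : Type} [Fintype ι] [LinearOrder ι]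

lemma polyM_of_submod (f : Finset ι → ℕ) (hpos : ∀ I, I.Nonempty → 1 ≤ f I)
    (hsub : ∀ I J, (I ∩ J).Nonempty → f (I ∩ J) + f (I ∪ J) ≤ f I + f J)
    (P : Set (ι → ℕ)) (hPdef : ∀ v, v ∈ P ↔ ∀ I : Finset ι, I.Nonempty → 1 + ∑ i ∈ I, v i ≤ f I) :
    ∃ (A : Finset (ι → ℕ)) (d : ℕ), (∀ v, v ∈ A ↔ v ∈ P) ∧ PolyM P d := by
  classical
  let A : Finset (ι → ℕ) := (Finset.Icc 0 (fun i => f {i})).filter (fun v => v ∈ P)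
  have hA : ∀ v, v ∈ A ↔ v ∈ P := by
    intro v
    simp only [A, Finset.mem_filter, Finset.mem_Icc]
    refine ⟨fun h => h.2, fun h => ⟨⟨fun i => Nat.zero_le _, fun i => ?_⟩, h⟩⟩
    have := (hPdef v).mp h {i} (by simp)
    simp only [Finset.sum_singleton] at this
    change v i ≤ f {i}
    omega
  have h0 : (0 : ι → ℕ) ∈ A := by
    rw [hA, hPdef]
    intro I hI
    simpa using hpos I hI
  obtain ⟨b0, hb0, hmax⟩ := Finset.exists_max_image A (fun v => ∑ i, v i) ⟨0, h0⟩
  refine ⟨A, ∑ i, b0 i, hA, ?_, ?_, ⟨b0, (hA _).mp hb0, rfl⟩, ?_⟩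
  · intro u v hv huv
    rw [hPdef] at *
    intro I hI
    refine le_trans ?_ (hv I hI)
    gcongr with i _
    exact huv i
  · intro v hv
    exact hmax v ((hA v).mpr hv)
  · intro b hb hbd v hv j hj
    have hbP := (hPdef b).mp hb
    have hvP := (hPdef v).mp hv
    have hsingle : ∀ (X : Finset ι) (l : ι),
        ∑ x ∈ X, (Pi.single l 1 : ι → ℕ) x = if l ∈ X then 1 else 0 := by
      intro X l
      exact Finset.sum_pi_single' l 1 X
    have hnot : (b + Pi.single j 1) ∉ P := by
      intro h
      have h1 := hmax _ ((hA _).mpr h)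
      simp only [Pi.add_apply, Finset.sum_add_distrib, hsingle, Finset.mem_univ, if_true] at h1
      omega
    rw [hPdef] at hnot
    push Not at hnot
    obtain ⟨I, hI, hlt⟩ := hnot
    simp only [Pi.add_apply, Finset.sum_add_distrib, hsingle] at hlt
    have hIb := hbP I hI
    have hjI : j ∈ I := by
      by_contra h
      rw [if_neg h] at hlt
      omega
    rw [if_pos hjI] at hlt
    let 𝒯 : Finset (Finset ι) := Finset.univ.filter fun X => j ∈ X ∧ 1 + ∑ x ∈ X, b x = f X
    have hI𝒯 : I ∈ 𝒯 := by
      simp only [𝒯, Finset.mem_filter, Finset.mem_univ, true_and]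
      exact ⟨hjI, by omega⟩
    obtain ⟨I0, hI0, hmin⟩ := Finset.exists_min_image 𝒯 Finset.card ⟨I, hI𝒯⟩
    have hI0' : j ∈ I0 ∧ 1 + ∑ x ∈ I0, b x = f I0 := by
      simpa [𝒯] using hI0
    have hsubset : ∀ X, j ∈ X → 1 + ∑ x ∈ X, b x = f X → I0 ⊆ X := by
      intro X hjX hX
      have hjm : j ∈ I0 ∩ X := Finset.mem_inter.mpr ⟨hI0'.1, hjX⟩
      have h1 := hsub I0 X ⟨j, hjm⟩
      have h2 := hbP (I0 ∩ X) ⟨j, hjm⟩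
      have h3 := hbP (I0 ∪ X) ⟨j, Finset.mem_union_left _ hI0'.1⟩
      have h4 := Finset.sum_union_inter (s₁ := I0) (s₂ := X) (f := b)
      have h5 : I0 ∩ X ∈ 𝒯 := by
        simp only [𝒯, Finset.mem_filter, Finset.mem_univ, true_and]
        exact ⟨hjm, by omega⟩
      have h6 := hmin _ h5
      have h7 : I0 ∩ X = I0 := Finset.eq_of_subset_of_card_le Finset.inter_subset_left h6
      exact Finset.inter_eq_left.mp h7
    obtain ⟨i, hiI, hi⟩ : ∃ i ∈ I0, v i < b i := by
      by_contra hcon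
      push Not at hcon
      have h1 := Finset.sum_lt_sum hcon ⟨j, hI0'.1, hj⟩
      have h2 := hvP I0 ⟨j, hI0'.1⟩
      omega
    have hbe : (b + Pi.single j 1 - Pi.single i 1) + Pi.single i 1 = b + Pi.single j 1 := by
      refine tsub_add_cancel_of_le ?_
      intro l
      by_cases hl : l = i
      · subst hl; simp; omega
      · simp [hl]
    refine ⟨i, hi, _, ?_, hbe⟩
    rw [hPdef]
    intro X hX
    by_contra hcon
    have h1 := congrArg (fun g : ι → ℕ => ∑ x ∈ X, g x) hbe
    simp only [Pi.add_apply, Finset.sum_add_distrib, hsingle] at h1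
    have h2 := hbP X hX
    have hjX : j ∈ X := by
      by_contra h
      rw [if_neg h] at h1
      omega
    rw [if_pos hjX] at h1
    have hiX : i ∉ X := by
      intro h
      rw [if_pos h] at h1
      omega
    rw [if_neg hiX] at h1
    exact hiX (hsubset X hjX (by omega) hiI)

end PartFive
/-! ### Part 6: evaluation of the Snapper polynomial -/

section PartSix

lemma mk_multichoose (q : ℕ) :
    (PowerSeries.mk fun n => Nat.multichoose q n : PowerSeries ℕ) =
      (PowerSeries.mk fun _ => 1 : PowerSeries ℕ) ^ q := by
  induction q with
  | zero =>
    ext n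
    rw [PowerSeries.coeff_mk, pow_zero, PowerSeries.coeff_one]
    cases n <;> simp
  | succ q ih =>
    rw [pow_succ, ← ih]
    ext n
    rw [PowerSeries.coeff_mk, PowerSeries.coeff_mul, ← sum_multichoose,
      Finset.Nat.sum_antidiagonal_eq_sum_range_succ_mk, ← Nat.range_succ_eq_Icc_zero]
    simp

lemma multichoose_mul (k q n : ℕ) :
    Nat.multichoose (k * q) n =
      ∑ u ∈ Finset.piAntidiag (Finset.univ : Finset (Fin k)) n, ∏ c, Nat.multichoose q (u c) := by
  classical
  have h1 : Nat.multichoose (k * q) n =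
      PowerSeries.coeff n (∏ _c : Fin k, (PowerSeries.mk fun n => Nat.multichoose q n : PowerSeries ℕ)) := by
    rw [Finset.prod_const, Finset.card_univ, Fintype.card_fin, mk_multichoose, ← pow_mul,
      mul_comm q k, ← mk_multichoose, PowerSeries.coeff_mk]
  rw [h1, PowerSeries.coeff_prod]
  refine Finset.sum_equiv Finsupp.equivFunOnFinite ?_ ?_
  · intro l
    simp
  · intro l _
    simp

lemma binomLowerP_eval (k κ q : ℕ) :
    (binomLowerP (Polynomial.C (k : ℚ) * Polynomial.X) κ).eval (q : ℚ) =
      (Nat.multichoose (k * q) κ : ℚ) := by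
  unfold binomLowerP
  rw [Polynomial.eval_smul, Polynomial.eval_prod, Nat.multichoose_eq]
  have h1 := Nat.ascFactorial_eq_factorial_mul_choose' (k * q) κ
  rw [Nat.ascFactorial_eq_prod_range] at h1
  have h2 : (∏ j ∈ Finset.range κ, (k * q + j : ℚ)) = κ.factorial * ((k * q + κ - 1).choose κ : ℕ) := by
    exact_mod_cast h1
  simp only [Polynomial.eval_add, Polynomial.eval_mul, Polynomial.eval_C, Polynomial.eval_X]
  rw [h2, smul_eq_mul, ← mul_assoc, inv_mul_cancel₀ (by positivity), one_mul]

/-- push forward of a vector along the copies -/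
def pushV {m : ℕ} {k : Fin m → ℕ} (v : (Σ i : Fin m, Fin (k i)) → ℕ) : Fin m → ℕ :=
  fun i => ∑ c, v ⟨i, c⟩

lemma sum_push {m : ℕ} (k κ : Fin m → ℕ) (q : ℕ)
    (B : Finset ((Σ i : Fin m, Fin (k i)) → ℕ)) (hB : ∀ v, v ∈ B ↔ pushV v = κ) :
    ∏ i, Nat.multichoose (k i * q) (κ i) = ∑ v ∈ B, ∏ x, Nat.multichoose q (v x) := by
  classical
  simp only [multichoose_mul]
  rw [Finset.prod_univ_sum]
  symm
  refine Finset.sum_equiv (Equiv.piCurry (fun (i : Fin m) (_ : Fin (k i)) => ℕ)) ?_ ?_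
  · intro v
    rw [hB, Fintype.mem_piFinset, funext_iff]
    refine forall_congr' fun i => ?_
    simp only [Finset.mem_piAntidiag, Finset.mem_univ, implies_true, and_true]
    exact Iff.rfl
  · intro v _
    rw [Fintype.prod_sigma]
    rfl

lemma mem_iff_push {α : Type} [Fintype α] [DecidableEq α] {m : ℕ} {rk : Finset α → ℕ}
    (hM : IsMatroidRank rk) (hloopless : ∀ e : α, rk {e} = 1)
    {S : Fin m → Finset α} (hS : ∀ i, (S i).Nonempty) {k : Fin m → ℕ}
    (v : (Σ i : Fin m, Fin (k i)) → ℕ) :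
    (∀ I : Finset (Σ i : Fin m, Fin (k i)), I.Nonempty →
      1 + ∑ x ∈ I, v x ≤ rk (I.biUnion fun x => S x.1)) ↔ DragonHallRado rk S (pushV v) := by
  classical
  have hsum : ∀ J : Finset (Fin m), ∑ i ∈ J, pushV v i =
      ∑ x ∈ J.sigma (fun i => (Finset.univ : Finset (Fin (k i)))), v x := by
    intro J
    rw [Finset.sum_sigma]
    rfl
  constructor
  · intro h J hJ
    rw [hsum]
    rcases Finset.eq_empty_or_nonempty (J.sigma (fun i => (Finset.univ : Finset (Fin (k i)))))
      with he | hne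
    · rw [he, Finset.sum_empty]
      obtain ⟨i, hi⟩ := hJ
      obtain ⟨e, he⟩ := hS i
      rw [add_zero, ← hloopless e]
      refine hM.2.1 _ _ ?_
      rw [Finset.singleton_subset_iff, Finset.mem_biUnion]
      exact ⟨i, hi, he⟩
    · refine (h _ hne).trans (hM.2.1 _ _ ?_)
      intro e he
      obtain ⟨x, hx, hxe⟩ := Finset.mem_biUnion.mp he
      exact Finset.mem_biUnion.mpr ⟨x.1, (Finset.mem_sigma.mp hx).1, hxe⟩
  · intro h I hI
    have h1 := h (I.image Sigma.fst) (hI.image _)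
    rw [hsum, Finset.image_biUnion] at h1
    refine le_trans ?_ h1
    gcongr
    intro x hx
    exact Finset.mem_sigma.mpr ⟨Finset.mem_image_of_mem _ hx, Finset.mem_univ _⟩

lemma biUnion_submod {α : Type} [Fintype α] [DecidableEq α] {rk : Finset α → ℕ}
    (hM : IsMatroidRank rk) {ι : Type} [DecidableEq ι] (U : ι → Finset α) (I J : Finset ι) :
    rk ((I ∩ J).biUnion U) + rk ((I ∪ J).biUnion U) ≤ rk (I.biUnion U) + rk (J.biUnion U) := by
  refine le_trans ?_ (hM.2.2.1 _ _)
  refine add_le_add (hM.2.1 _ _ ?_) (hM.2.1 _ _ ?_)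
  · intro e he
    obtain ⟨x, hx, hxe⟩ := Finset.mem_biUnion.mp he
    obtain ⟨h1, h2⟩ := Finset.mem_inter.mp hx
    exact Finset.mem_inter.mpr ⟨Finset.mem_biUnion.mpr ⟨x, h1, hxe⟩,
      Finset.mem_biUnion.mpr ⟨x, h2, hxe⟩⟩
  · intro e he
    obtain ⟨x, hx, hxe⟩ := Finset.mem_biUnion.mp he
    rcases Finset.mem_union.mp hx with h1 | h1
    · exact Finset.mem_union_left _ (Finset.mem_biUnion.mpr ⟨x, h1, hxe⟩)
    · exact Finset.mem_union_right _ (Finset.mem_biUnion.mpr ⟨x, h1, hxe⟩)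

lemma chi_eval {α : Type} [Fintype α] [DecidableEq α] {m : ℕ} {rk : Finset α → ℕ}
    {S : Fin m → Finset α} {k : Fin m → ℕ}
    (A : Finset ((Σ i : Fin m, Fin (k i)) → ℕ))
    (hA : ∀ v, v ∈ A ↔ DragonHallRado rk S (pushV v)) (q : ℕ) :
    (∑ᶠ (κ : Fin m → ℕ) (_ : DragonHallRado rk S κ),
      ∏ i, binomLowerP (Polynomial.C (k i : ℚ) * Polynomial.X) (κ i)).eval (q : ℚ) =
      ((∑ v ∈ A, ∏ x, Nat.multichoose q (v x) : ℕ) : ℚ) := by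
  classical
  let K : Finset (Fin m → ℕ) := (Finset.Icc 0 (fun i => rk (S i))).filter (DragonHallRado rk S)
  have hK : ∀ κ, κ ∈ K ↔ DragonHallRado rk S κ := by
    intro κ
    simp only [K, Finset.mem_filter, Finset.mem_Icc]
    refine ⟨fun h => h.2, fun h => ⟨⟨fun i => Nat.zero_le _, fun i => ?_⟩, h⟩⟩
    have := h {i} (by simp)
    simp only [Finset.sum_singleton, Finset.singleton_biUnion] at this
    change κ i ≤ rk (S i)
    omega
  have h1 : (∑ᶠ (κ : Fin m → ℕ) (_ : DragonHallRado rk S κ),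
      ∏ i, binomLowerP (Polynomial.C (k i : ℚ) * Polynomial.X) (κ i)) =
      ∑ κ ∈ K, ∏ i, binomLowerP (Polynomial.C (k i : ℚ) * Polynomial.X) (κ i) := by
    rw [← finsum_mem_coe_finset]
    simp only [Finset.mem_coe, hK]
  rw [h1, Polynomial.eval_finsetSum]
  have h2 : ∑ v ∈ A, ∏ x, Nat.multichoose q (v x) =
      ∑ κ ∈ K, ∑ v ∈ A with pushV v = κ, ∏ x, Nat.multichoose q (v x) := by
    rw [Finset.sum_fiberwise_of_maps_to]
    intro v hv
    rw [hK, ← hA]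
    exact hv
  rw [h2, Nat.cast_sum]
  refine Finset.sum_congr rfl fun κ hκ => ?_
  rw [Polynomial.eval_prod, ← sum_push k κ q, Nat.cast_prod]
  · exact Finset.prod_congr rfl fun i _ => binomLowerP_eval _ _ _
  · intro v
    rw [Finset.mem_filter, hA]
    refine ⟨fun h => h.2, fun h => ⟨?_, h⟩⟩
    rw [h, ← hK]
    exact hκ

end PartSix
/-! ### Part 7: the binomial basis -/

section PartSeven

/-- the binomial basis polynomial `binom(X + d - j, d)` -/
noncomputable def bpoly (d j : ℕ) : Polynomial ℚ :=
  (d.factorial : ℚ)⁻¹ • ∏ l ∈ Finset.range d, (Polynomial.X + Polynomial.C ((d : ℚ) - j - l))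

lemma bpoly_eval (d j q : ℕ) (hj : j ≤ d) :
    (bpoly d j).eval (q : ℚ) = ((q + d - j).choose d : ℚ) := by
  unfold bpoly
  rw [Polynomial.eval_smul, Polynomial.eval_prod]
  have h1 : ∀ l ∈ Finset.range d, (Polynomial.X + Polynomial.C ((d : ℚ) - j - l)).eval (q : ℚ) =
      ((q + d - j : ℕ) : ℚ) - l := by
    intro l _
    rw [Nat.cast_sub (by omega)]
    simp
    ring
  rw [Finset.prod_congr rfl h1, ← descPochhammer_eval_eq_prod_range,
    descPochhammer_eval_eq_descFactorial, Nat.descFactorial_eq_factorial_mul_choose]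
  rw [Nat.cast_mul, smul_eq_mul, ← mul_assoc, inv_mul_cancel₀ (by positivity), one_mul]

lemma bpoly_prod_monic (d j : ℕ) :
    (∏ l ∈ Finset.range d, (Polynomial.X + Polynomial.C ((d : ℚ) - j - l))).Monic :=
  Polynomial.monic_prod_of_monic _ _ fun _ _ => Polynomial.monic_X_add_C _

lemma bpoly_prod_natDegree (d j : ℕ) :
    (∏ l ∈ Finset.range d, (Polynomial.X + Polynomial.C ((d : ℚ) - j - l))).natDegree = d := by
  rw [Polynomial.natDegree_prod_of_monic _ _ fun _ _ => Polynomial.monic_X_add_C _]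
  simp only [Polynomial.natDegree_X_add_C, Finset.sum_const, Finset.card_range, smul_eq_mul,
    mul_one]

lemma bpoly_coeff (d j : ℕ) : (bpoly d j).coeff d = (d.factorial : ℚ)⁻¹ := by
  unfold bpoly
  rw [Polynomial.coeff_smul]
  have := bpoly_prod_monic d j
  rw [Polynomial.Monic, Polynomial.leadingCoeff, bpoly_prod_natDegree] at this
  rw [this]
  simp

lemma bpoly_natDegree_le (d j : ℕ) : (bpoly d j).natDegree ≤ d := by
  unfold bpoly
  refine (Polynomial.natDegree_smul_le _ _).trans ?_
  rw [bpoly_prod_natDegree]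

lemma hstar_extract {W : Type} [Fintype W] [Nonempty W] (D : W → ℕ) (d0 : ℕ) (hD : ∀ w, D w ≤ d0)
    (χ : Polynomial ℚ) (hev : ∀ q : ℕ, χ.eval (q : ℚ) = ((∑ w, (q + d0 - D w).choose d0 : ℕ) : ℚ))
    (d : ℕ) (hd : d = χ.natDegree) (h : ℕ → ℚ)
    (hh : χ = ∑ j ∈ Finset.range (d + 1), Polynomial.C (h j) * bpoly d j) :
    d = d0 ∧ ∀ j, (Nat.card {w // D w = j} : ℚ) = if j ≤ d then h j else 0 := by
  classical
  have hχ : χ = ∑ w, bpoly d0 (D w) := by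
    refine Polynomial.eq_of_infinite_eval_eq _ _ ?_
    refine (Set.infinite_range_of_injective (Nat.cast_injective (R := ℚ))).mono ?_
    rintro _ ⟨q, rfl⟩
    change χ.eval (q : ℚ) = _
    rw [hev, Polynomial.eval_finsetSum, Nat.cast_sum]
    exact Finset.sum_congr rfl fun w _ => (bpoly_eval d0 (D w) q (hD w)).symm
  have hdd : d = d0 := by
    rw [hd]
    refine le_antisymm ?_ ?_
    · rw [hχ]
      exact Polynomial.natDegree_sum_le_of_forall_le _ _ fun w _ => bpoly_natDegree_le _ _
    · refine Polynomial.le_natDegree_of_ne_zero ?_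
      rw [hχ, Polynomial.finsetSum_coeff]
      simp only [bpoly_coeff, Finset.sum_const, nsmul_eq_mul]
      have h1 : (Finset.univ : Finset W).card ≠ 0 := by
        rw [Finset.card_univ]; exact Fintype.card_ne_zero
      exact mul_ne_zero (Nat.cast_ne_zero.mpr h1)
        (inv_ne_zero (Nat.cast_ne_zero.mpr (Nat.factorial_ne_zero _)))
  refine ⟨hdd, ?_⟩
  clear hd
  subst hdd
  let N : ℕ → ℕ := fun j => (Finset.univ.filter fun w => D w = j).card
  have hN : ∀ j, Nat.card {w // D w = j} = N j := by
    intro j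
    rw [Nat.card_eq_fintype_card, Fintype.card_subtype]
  have hsum : ∀ q : ℕ, ∑ j ∈ Finset.range (d + 1), ((N j : ℚ) - h j) * ((q + d - j).choose d : ℚ) = 0 := by
    intro q
    have h1 := hev q
    rw [hh, Polynomial.eval_finsetSum] at h1
    have h2 : ∑ w, (q + d - D w).choose d =
        ∑ j ∈ Finset.range (d + 1), N j * (q + d - j).choose d := by
      rw [← Finset.sum_fiberwise_of_maps_to (s := Finset.univ) (t := Finset.range (d + 1)) (g := D)
        (fun w _ => Finset.mem_range.mpr (Nat.lt_succ_of_le (hD w)))]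
      refine Finset.sum_congr rfl fun j _ => ?_
      rw [Finset.sum_congr rfl (g := fun _ => (q + d - j).choose d)
        (fun w hw => by rw [(Finset.mem_filter.mp hw).2]), Finset.sum_const, smul_eq_mul]
    rw [h2, Nat.cast_sum] at h1
    simp only [sub_mul]
    rw [Finset.sum_sub_distrib, sub_eq_zero]
    simp only [Nat.cast_mul] at h1
    rw [← h1]
    refine Finset.sum_congr rfl fun j hj => ?_
    rw [Polynomial.eval_mul, Polynomial.eval_C,
      bpoly_eval d j q (Nat.lt_succ_iff.mp (Finset.mem_range.mp hj))]
  have key : ∀ j, j ≤ d → (N j : ℚ) - h j = 0 := by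
    intro j
    induction j using Nat.strong_induction_on with
    | _ j ih =>
      intro hj
      have h1 := hsum j
      rw [Finset.sum_eq_single j] at h1
      · simpa using h1
      · intro i hi hij
        rcases lt_or_gt_of_ne hij with h2 | h2
        · rw [ih i h2 (by omega), zero_mul]
        · have := Finset.mem_range.mp hi
          rw [Nat.choose_eq_zero_of_lt (show j + d - i < d by omega)]
          simp
      · intro h2
        exact absurd (Finset.mem_range.mpr (by omega)) h2
  intro j
  rw [hN]
  split_ifs with hj
  · exact sub_eq_zero.mp (key j hj)
  · have : N j = 0 := by
      simp only [N, Finset.card_eq_zero, Finset.filter_eq_empty_iff]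
      intro w _ hw
      have := hD w
      omega
    simp [this]

end PartSeven

lemma core_macaulay {ι : Type} [Fintype ι] [LinearOrder ι] (f : Finset ι → ℕ)
    (hpos : ∀ I, I.Nonempty → 1 ≤ f I)
    (hsub : ∀ I J, (I ∩ J).Nonempty → f (I ∩ J) + f (I ∪ J) ≤ f I + f J)
    (χ : Polynomial ℚ)
    (hev : ∀ A : Finset (ι → ℕ),
      (∀ v, v ∈ A ↔ ∀ I : Finset ι, I.Nonempty → 1 + ∑ i ∈ I, v i ≤ f I) →
      ∀ q : ℕ, χ.eval (q : ℚ) = ((∑ v ∈ A, ∏ i, Nat.multichoose q (v i) : ℕ) : ℚ))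
    (d : ℕ) (hd : d = χ.natDegree) (h : ℕ → ℚ)
    (hh : χ = ∑ j ∈ Finset.range (d + 1), Polynomial.C (h j) * bpoly d j) :
    χ.eval 0 = 1 ∧ IsMacaulayVector d h ∧ ∀ j ≤ d, ∃ n : ℕ, h j = (n : ℚ) := by
  obtain ⟨A, d0, hA, hP⟩ := polyM_of_submod f hpos hsub
    {v | ∀ I : Finset ι, I.Nonempty → 1 + ∑ x ∈ I, v x ≤ f I} (fun v => Iff.rfl)
  have hev0 : ∀ q : ℕ, χ.eval (q : ℚ) = ((∑ v ∈ A, gq q v : ℕ) : ℚ) := hev A hA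
  generalize {v : ι → ℕ | ∀ I : Finset ι, I.Nonempty → 1 + ∑ x ∈ I, v x ≤ f I} = P at hA hP
  have h0A : (0 : ι → ℕ) ∈ A := by
    obtain ⟨b, hb, _⟩ := hP.base
    exact (hA 0).mpr (hP.down 0 b hb (fun i => Nat.zero_le _))
  have hone : χ.eval 0 = 1 := by
    have h1 := hev0 0
    rw [← card_plist A h0A 0] at h1
    simpa [plist] using h1
  obtain ⟨w0, _⟩ := exists_word hP [] (by simp) (by simp)
  have : Nonempty (Words P d0) := ⟨w0⟩
  obtain ⟨hdd, hcard⟩ := hstar_extract (fun w : Words P d0 => (descW P d0 w).card) d0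
    (fun w => by simpa using Finset.card_le_univ (descW P d0 w)) χ
    (fun q => by rw [hev0, count_main hP A hA q]) d hd h hh
  clear hd
  subst hdd
  refine ⟨hone, macaulay_of_shelling (words_shelling hP) h hcard, ?_⟩
  intro j hj
  have hcj := hcard j
  rw [if_pos hj] at hcj
  exact ⟨_, hcj.symm⟩

/-- For a loopless matroid of rank `r ≥ 1`, pairwise distinct nonempty subsets `S_1, …, S_m`,
and nonnegative integers `k_1, …, k_m`, the Snapper polynomial
`χ(q) = Σ_{κ dragon Hall–Rado} Π_i binom(q k_i + κ_i - 1, κ_i)` satisfies `χ(0) = 1`, and the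
coefficients `h_0, …, h_d` (where `d = deg χ`) of its expansion
`χ(q) = Σ_j h_j binom(q + d - j, d)` form a Macaulay vector; in particular each `h_j` is a
nonnegative integer. -/
theorem hstar_vector_of_simplicially_positive_is_macaulay
    {α : Type} [Fintype α] [DecidableEq α] {m r : ℕ}
    (rk : Finset α → ℕ) (hM : IsMatroidRank rk) (hloopless : ∀ e : α, rk {e} = 1)
    (hrank : rk Finset.univ = r) (hr : 1 ≤ r)
    (S : Fin m → Finset α) (hS : ∀ i, (S i).Nonempty) (hSinj : Function.Injective S)
    (k : Fin m → ℕ)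
    (χ : Polynomial ℚ)
    (hχ : χ = ∑ᶠ (κ : Fin m → ℕ) (_ : DragonHallRado rk S κ),
      ∏ i, binomLowerP (Polynomial.C (k i : ℚ) * Polynomial.X) (κ i))
    (d : ℕ) (hd : d = χ.natDegree)
    (h : ℕ → ℚ)
    (hh : χ = ∑ j ∈ Finset.range (d + 1), Polynomial.C (h j) *
      ((d.factorial : ℚ)⁻¹ •
        ∏ l ∈ Finset.range d, (Polynomial.X + Polynomial.C ((d : ℚ) - j - l)))) :
    χ.eval 0 = 1 ∧ IsMacaulayVector d h ∧ ∀ j ≤ d, ∃ n : ℕ, h j = (n : ℚ) := by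
  obtain ⟨ord⟩ : Nonempty (LinearOrder (Σ i : Fin m, Fin (k i))) :=
    ⟨LinearOrder.lift' (Fintype.equivFin (Σ i : Fin m, Fin (k i)))
      (Fintype.equivFin (Σ i : Fin m, Fin (k i))).injective⟩
  refine core_macaulay (ι := Σ i : Fin m, Fin (k i)) (fun I => rk (I.biUnion fun x => S x.1))
    ?_ ?_ χ ?_ d hd h hh
  · rintro I ⟨x, hx⟩
    obtain ⟨e, he⟩ := hS x.1
    rw [← hloopless e]
    refine hM.2.1 _ _ ?_
    rw [Finset.singleton_subset_iff, Finset.mem_biUnion]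
    exact ⟨x, hx, he⟩
  · intro I J _
    exact @biUnion_submod _ _ _ _ hM _ ord.toDecidableEq (fun x => S x.1) I J
  · intro A hA q
    rw [hχ]
    exact chi_eval A (fun v => (hA v).trans (mem_iff_push hM hloopless hS v)) q
end

section
/- Let M be a loopless matroid of rank r ≥ 1 with rank function rk_M on a finite ground set E, let S_1,…,S_m be pairwise distinct nonempty subsets of E, and let k = (k_1,…,k_m) ∈ ℤ^m. Define the Snapper polynomial χ(q) = Σ_{κ} Π_{i=1}^m binom(q·k_i + κ_i − 1, κ_i) ∈ ℚ[q], where the (finite) sum is over all κ ∈ ℤ_{≥0}^m satisfying the dragon Hall–Rado condition, and set c = Σ_{i=1}^m k_i · h_{S_i} in the Chow ring A(M)_ℚ with rational coefficients. Then: (a) the degree of χ is at most the largest integer j ≥ 0 such that c^j ≠ 0 in A(M)_ℚ (the numerical dimension of c); and (b) the degree of χ equals r−1 if and only if c^{r−1} ≠ 0 in A(M)_ℚ. -/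
open Finset Polynomial

attribute [local instance] Classical.propDecidable

/-- A flat of a matroid: a subset closed under the closure operator. -/
def IsFlat {α : Type*} [Fintype α] [DecidableEq α] (rk : Finset α → ℕ) (F : Finset α) : Prop :=
  ∀ e : α, rk (insert e F) = rk F → e ∈ F

/-- The nonempty flats of a matroid, indexing the Chow ring generators `z_F`. -/
def NonemptyFlat {α : Type*} [Fintype α] [DecidableEq α] (rk : Finset α → ℕ) : Type _ :=
  {F : Finset α // F.Nonempty ∧ IsFlat rk F}

noncomputable instance {α : Type*} [Fintype α] [DecidableEq α] (rk : Finset α → ℕ) :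
    Fintype (NonemptyFlat rk) :=
  Fintype.ofFinite {F : Finset α // F.Nonempty ∧ IsFlat rk F}

/-- The defining ideal of the Chow ring of a matroid (with rational coefficients): generated
by the products `z_F z_{F'}` over incomparable pairs of nonempty flats, and the linear forms
`Σ_{F ∋ i} z_F` for ground set elements `i`. -/
noncomputable def chowIdealQ {α : Type*} [Fintype α] [DecidableEq α] (rk : Finset α → ℕ) :
    Ideal (MvPolynomial (NonemptyFlat rk) ℚ) :=
  Ideal.span
    ({p | ∃ F F' : NonemptyFlat rk, ¬F.1 ⊆ F'.1 ∧ ¬F'.1 ⊆ F.1 ∧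
        p = MvPolynomial.X F * MvPolynomial.X F'} ∪
      {p | ∃ i : α,
        p = ∑ F : NonemptyFlat rk, if i ∈ F.1 then MvPolynomial.X F else 0})

/-- The Chow ring `A(M)_ℚ` of a loopless matroid, with rational coefficients. -/
noncomputable def ChowRingQ {α : Type*} [Fintype α] [DecidableEq α] (rk : Finset α → ℕ) :=
  MvPolynomial (NonemptyFlat rk) ℚ ⧸ chowIdealQ rk

noncomputable instance {α : Type*} [Fintype α] [DecidableEq α] (rk : Finset α → ℕ) :
    CommRing (ChowRingQ rk) :=
  Ideal.Quotient.commRing (chowIdealQ rk)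

/-- The simplicial class `h_S = -Σ_{F ⊇ S} z_F`, as a polynomial representative. -/
noncomputable def hPolyQ {α : Type*} [Fintype α] [DecidableEq α] (rk : Finset α → ℕ)
    (S : Finset α) : MvPolynomial (NonemptyFlat rk) ℚ :=
  -∑ F : NonemptyFlat rk, if S ⊆ F.1 then MvPolynomial.X F else 0

section Helpers

variable {α : Type} [Fintype α] [DecidableEq α]

/-- A family of ring elements indexed by sets satisfying the simplicial relations. -/
structure GoodFam (rk : Finset α → ℕ) {B : Type} [CommRing B] (b : Finset α → B) : Prop where
  eqRank : ∀ S T : Finset α, S.Nonempty → S ⊆ T → rk S = rk T → b S = b T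
  single : ∀ i : α, b {i} = 0
  rel : ∀ S T : Finset α, S.Nonempty → T.Nonempty → (b S - b (S ∪ T)) * (b T - b (S ∪ T)) = 0

theorem rk_insert_le {rk : Finset α → ℕ} (hM : IsMatroidRank rk) (i : α) (S : Finset α) :
    rk (insert i S) ≤ rk S + 1 := by
  have h1 := hM.2.2.1 {i} S
  have h2 := hM.2.2.2 i
  rw [← Finset.insert_eq] at h1
  omega

theorem rk_union_eq {rk : Finset α → ℕ} (hM : IsMatroidRank rk) {S T U : Finset α}
    (hST : S ⊆ T) (hr : rk S = rk T) (hSU : S ⊆ U) : rk (U ∪ T) = rk U := by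
  have h1 := hM.2.2.1 U T
  have h2 := hM.2.1 S (U ∩ T) (Finset.subset_inter hSU hST)
  have h3 := hM.2.1 U (U ∪ T) Finset.subset_union_left
  omega

theorem flat_subset {rk : Finset α → ℕ} (hM : IsMatroidRank rk) {S T U : Finset α}
    (hST : S ⊆ T) (hr : rk S = rk T) (hSU : S ⊆ U) (hU : IsFlat rk U) : T ⊆ U := by
  intro e he
  apply hU
  have h1 := rk_union_eq hM hST hr hSU
  have h2 := hM.2.1 (insert e U) (U ∪ T) (by
    intro x hx
    simp only [Finset.mem_insert, Finset.mem_union] at *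
    rcases hx with rfl | hx
    · exact Or.inr he
    · exact Or.inl hx)
  have h3 := hM.2.1 U (insert e U) (Finset.subset_insert _ _)
  omega

theorem exists_closure {rk : Finset α → ℕ} (hM : IsMatroidRank rk) (S : Finset α) :
    ∃ T, S ⊆ T ∧ rk S = rk T ∧ IsFlat rk T := by
  obtain ⟨T, hT, hmax⟩ := Finset.exists_max_image
    (Finset.univ.filter (fun T : Finset α => S ⊆ T ∧ rk S = rk T)) Finset.card
    ⟨S, by simp⟩
  simp only [Finset.mem_filter, Finset.mem_univ, true_and] at hT hmax
  refine ⟨T, hT.1, hT.2, ?_⟩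
  intro e he
  by_contra hcon
  have := hmax (insert e T) ⟨hT.1.trans (Finset.subset_insert _ _), by omega⟩
  rw [Finset.card_insert_of_notMem hcon] at this
  omega

theorem GoodFam.absorb {rk : Finset α → ℕ} (hM : IsMatroidRank rk)
    {B : Type} [CommRing B] {b : Finset α → B} (hb : GoodFam rk b) :
    ∀ (n : ℕ) (S T : Finset α), S ⊆ T → S.Nonempty → (T \ S).card = n →
      ∀ s : ℕ, rk T ≤ rk S + s → b S * b T ^ s = b T ^ (s + 1) := by
  intro n
  induction n with
  | zero =>
    intro S T hST hS hc s hs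
    have : S = T := Finset.Subset.antisymm hST (by
      rw [Finset.card_eq_zero, Finset.sdiff_eq_empty_iff_subset] at hc; exact hc)
    subst this
    ring
  | succ n ih =>
    intro S T hST hS hc s hs
    have hne : (T \ S).Nonempty := by
      rw [← Finset.card_pos]; omega
    obtain ⟨i, hi⟩ := hne
    simp only [Finset.mem_sdiff] at hi
    have hS'T : insert i S ⊆ T := Finset.insert_subset hi.1 hST
    have hcard : (T \ insert i S).card = n := by
      have h1 := Finset.card_sdiff_of_subset hS'T
      have h2 := Finset.card_sdiff_of_subset hST
      rw [Finset.card_insert_of_notMem hi.2] at h1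
      omega
    have ih' := ih (insert i S) T hS'T (Finset.insert_nonempty _ _) hcard
    have hle := rk_insert_le hM i S
    have hge := hM.2.1 S (insert i S) (Finset.subset_insert _ _)
    by_cases hr : rk S = rk (insert i S)
    · rw [hb.eqRank S (insert i S) hS (Finset.subset_insert _ _) hr]
      exact ih' s (by omega)
    · have hT := hM.2.1 _ _ hS'T
      obtain ⟨s, rfl⟩ : ∃ s', s = s' + 1 := ⟨s - 1, by omega⟩
      have e1 := ih' s (by omega)
      have e2 := hb.rel S {i} hS (Finset.singleton_nonempty _)
      rw [hb.single, Finset.union_comm, ← Finset.insert_eq] at e2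
      linear_combination (-b S + b (insert i S) + b T) * e1 - b T ^ s * e2

theorem GoodFam.pow_zero' {rk : Finset α → ℕ} (hM : IsMatroidRank rk)
    (hl : ∀ e : α, rk {e} = 1)
    {B : Type} [CommRing B] {b : Finset α → B} (hb : GoodFam rk b) (S : Finset α)
    (hS : S.Nonempty) (n : ℕ) (hn : rk S ≤ n) : b S ^ n = 0 := by
  obtain ⟨i, hi⟩ := hS
  have h0 := hM.2.1 {i} S (by simpa using hi)
  rw [hl] at h0
  obtain ⟨s, rfl⟩ : ∃ s', n = s' + 1 := ⟨n - 1, by omega⟩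
  rw [← hb.absorb hM _ {i} S (by simpa using hi) (Finset.singleton_nonempty _) rfl s
    (by rw [hl]; omega), hb.single, zero_mul]

theorem chain_count {rk : Finset α → ℕ} (m : Multiset (Finset α))
    (h1 : ∀ S ∈ m, ∀ T ∈ m, S ⊆ T ∨ T ⊆ S)
    (h2 : ∀ S ∈ m, m.count S < rk S)
    (h3 : ∀ S ∈ m, ∀ T ∈ m, S ⊂ T → rk S + m.count T < rk T) :
    ∀ (n : ℕ) (G : Finset α), G ∈ m → G.card = n →
      (m.filter (· ⊆ G)).card + 1 ≤ rk G ∧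
      ((∃ F ∈ m, F ⊂ G) → (m.filter (· ⊆ G)).card + 2 ≤ rk G) := by
  intro n
  induction n using Nat.strong_induction_on with
  | _ n ih =>
    intro G hG hn
    have hsplit : (m.filter (· ⊆ G)).card = (m.filter (· ⊂ G)).card + m.count G := by
      have : m.filter (· ⊆ G) = m.filter (· ⊂ G) + m.filter (fun x => G = x) := by
        rw [Multiset.filter_add_filter]
        have e1 : m.filter (fun a => a ⊂ G ∧ G = a) = 0 := by
          rw [Multiset.filter_eq_nil]
          rintro a - ⟨h, rfl⟩
          exact (ssubset_irrefl _ h)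
        rw [e1, add_zero]
        apply Multiset.filter_congr
        intro x _
        constructor
        · intro h
          rcases eq_or_ssubset_of_subset h with h | h
          · exact Or.inr h.symm
          · exact Or.inl h
        · rintro (h | rfl)
          · exact h.1
          · exact Finset.Subset.refl _
      rw [this, Multiset.card_add, ← Multiset.countP_eq_card_filter, ← Multiset.countP_eq_card_filter]
      simp only [Multiset.count]
    by_cases hF : ∃ F ∈ m, F ⊂ G
    · obtain ⟨F, hF1, hmax⟩ := Finset.exists_max_image
        (m.filter (· ⊂ G)).toFinset Finset.card (by
          obtain ⟨F, hF1, hF2⟩ := hF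
          exact ⟨F, by simp [hF1, hF2]⟩)
      simp only [Multiset.mem_toFinset, Multiset.mem_filter] at hF1 hmax
      have hle : (m.filter (· ⊂ G)).card ≤ (m.filter (· ⊆ F)).card := by
        apply Multiset.card_le_card
        rw [Multiset.le_filter]
        refine ⟨Multiset.filter_le _ _, ?_⟩
        intro a ha
        rw [Multiset.mem_filter] at ha
        rcases h1 a ha.1 F hF1.1 with h | h
        · exact h
        · have := hmax a ha
          rw [Finset.eq_of_subset_of_card_le h this]
      have := ih F.card (by rw [← hn]; exact Finset.card_lt_card hF1.2) F hF1.1 rfl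
      have h3' := h3 F hF1.1 G hG hF1.2
      constructor
      · omega
      · intro _; omega
    · have h0 : (m.filter (· ⊂ G)).card = 0 := by
        rw [Multiset.card_eq_zero, Multiset.filter_eq_nil]
        intro a ha h
        exact hF ⟨a, ha, h⟩
      have := h2 G hG
      exact ⟨by omega, fun h => absurd h hF⟩

theorem GoodFam.top {rk : Finset α → ℕ} (hM : IsMatroidRank rk)
    (hl : ∀ e : α, rk {e} = 1)
    {B : Type} [CommRing B] [Algebra ℚ B] {b : Finset α → B} (hb : GoodFam rk b) :
    ∀ (n : ℕ) (m : Multiset (Finset α)), (m.map (fun S => (Finset.univ \ S).card)).sum = n →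
      (∀ S ∈ m, S.Nonempty) → rk Finset.univ ≤ m.card + 1 →
      ∃ c : ℚ, (m.map b).prod = c • b Finset.univ ^ m.card := by
  intro n
  induction n using Nat.strong_induction_on with
  | _ n ih =>
    intro m hn hne hcard
    have ih' : ∀ m' : Multiset (Finset α), (m'.map (fun S => (Finset.univ \ S).card)).sum < n →
        (∀ S ∈ m', S.Nonempty) → rk Finset.univ ≤ m'.card + 1 →
        ∃ c : ℚ, (m'.map b).prod = c • b Finset.univ ^ m'.card :=
      fun m' h => ih _ h m' rfl
    have hco : ∀ S T : Finset α, S ⊂ T →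
        (Finset.univ \ T).card < (Finset.univ \ S).card := by
      intro S T h
      apply Finset.card_lt_card
      refine ⟨Finset.sdiff_subset_sdiff (Finset.Subset.refl _) h.1, fun h' => h.2 ?_⟩
      intro x hx
      by_contra hxS
      have := h' (Finset.mem_sdiff.2 ⟨Finset.mem_univ x, hxS⟩)
      exact (Finset.mem_sdiff.1 this).2 hx
    by_cases h1 : ∀ S ∈ m, ∀ T ∈ m, S ⊆ T ∨ T ⊆ S
    swap
    · push Not at h1
      obtain ⟨S, hS, T, hT, hST, hTS⟩ := h1
      have hneST : T ≠ S := by rintro rfl; exact hST (Finset.Subset.refl _)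
      obtain ⟨m1, rfl⟩ := Multiset.exists_cons_of_mem hS
      rw [Multiset.mem_cons] at hT
      obtain ⟨m2, rfl⟩ := Multiset.exists_cons_of_mem (hT.resolve_left hneST)
      have hSU : S ⊂ S ∪ T := ⟨Finset.subset_union_left, fun h => hTS (Finset.subset_union_right.trans h)⟩
      have hTU : T ⊂ S ∪ T := ⟨Finset.subset_union_right, fun h => hST (Finset.subset_union_left.trans h)⟩
      have c1 := hco _ _ hSU
      have c2 := hco _ _ hTU
      have nS : S.Nonempty := hne S (by simp)
      have nT : T.Nonempty := hne T (by simp)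
      have nU : (S ∪ T).Nonempty := nS.mono Finset.subset_union_left
      have nm : ∀ X ∈ m2, X.Nonempty := fun X hX => hne X (by simp [hX])
      simp only [Multiset.map_cons, Multiset.sum_cons, Multiset.card_cons] at hn hcard
      obtain ⟨a1, e1⟩ := ih' (S ::ₘ (S ∪ T) ::ₘ m2) (by
        simp only [Multiset.map_cons, Multiset.sum_cons]; omega) (by
          intro X hX; simp only [Multiset.mem_cons] at hX
          rcases hX with rfl | rfl | hX
          exacts [nS, nU, nm _ hX]) (by simpa using hcard)
      obtain ⟨a2, e2⟩ := ih' (T ::ₘ (S ∪ T) ::ₘ m2) (by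
        simp only [Multiset.map_cons, Multiset.sum_cons]; omega) (by
          intro X hX; simp only [Multiset.mem_cons] at hX
          rcases hX with rfl | rfl | hX
          exacts [nT, nU, nm _ hX]) (by simpa using hcard)
      obtain ⟨a3, e3⟩ := ih' ((S ∪ T) ::ₘ (S ∪ T) ::ₘ m2) (by
        simp only [Multiset.map_cons, Multiset.sum_cons]; omega) (by
          intro X hX; simp only [Multiset.mem_cons] at hX
          rcases hX with rfl | rfl | hX
          exacts [nU, nU, nm _ hX]) (by simpa using hcard)
      refine ⟨a1 + a2 - a3, ?_⟩
      simp only [Multiset.map_cons, Multiset.prod_cons, Multiset.card_cons] at e1 e2 e3 ⊢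
      rw [sub_smul, add_smul, ← e1, ← e2, ← e3]
      linear_combination (m2.map b).prod * hb.rel S T nS nT
    by_cases h2 : ∀ S ∈ m, m.count S < rk S
    swap
    · push Not at h2
      obtain ⟨S, hS, hc⟩ := h2
      obtain ⟨m', hm'⟩ := Multiset.le_iff_exists_add.1 (Multiset.le_count_iff_replicate_le.1 (le_refl (m.count S)))
      refine ⟨0, ?_⟩
      rw [hm', Multiset.map_add, Multiset.prod_add, Multiset.map_replicate, Multiset.prod_replicate,
        hb.pow_zero' hM hl S (hne S hS) _ hc, zero_mul, zero_smul]
    by_cases h3 : ∀ S ∈ m, ∀ T ∈ m, S ⊂ T → rk S + m.count T < rk T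
    swap
    · push Not at h3
      obtain ⟨S, hS, T, hT, hST, hc⟩ := h3
      obtain ⟨m1, rfl⟩ := Multiset.exists_cons_of_mem hS
      rw [Multiset.count_cons_of_ne hST.ne'] at hc
      obtain ⟨m', hm'⟩ := Multiset.le_iff_exists_add.1 (Multiset.le_count_iff_replicate_le.1 (le_refl (m1.count T)))
      have c1 := hco _ _ hST
      simp only [Multiset.map_cons, Multiset.sum_cons, Multiset.card_cons] at hn hcard
      obtain ⟨a1, e1⟩ := ih' (T ::ₘ m1) (by
        simp only [Multiset.map_cons, Multiset.sum_cons]; omega) (by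
          intro X hX; simp only [Multiset.mem_cons] at hX
          rcases hX with rfl | hX
          · exact hne _ hT
          · exact hne X (by simp [hX])) (by simpa using hcard)
      refine ⟨a1, ?_⟩
      simp only [Multiset.map_cons, Multiset.prod_cons, Multiset.card_cons] at e1 ⊢
      rw [← e1]
      have hp : (m1.map b).prod = b T ^ (m1.count T) * (m'.map b).prod := by
        conv_lhs => rw [hm']
        rw [Multiset.map_add, Multiset.prod_add, Multiset.map_replicate, Multiset.prod_replicate]
      rw [hp]
      have := hb.absorb hM _ S T hST.1 (hne S (by simp)) rfl _ hc
      linear_combination (m'.map b).prod * this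
    by_cases hm0 : m = 0
    · subst hm0
      exact ⟨1, by simp⟩
    obtain ⟨G, hG, hmax⟩ := Finset.exists_max_image m.toFinset Finset.card (by
      obtain ⟨x, hx⟩ := Multiset.exists_mem_of_ne_zero hm0
      exact ⟨x, by simpa using hx⟩)
    simp only [Multiset.mem_toFinset] at hG hmax
    have hsub : ∀ X ∈ m, X ⊆ G := by
      intro X hX
      rcases h1 X hX G hG with h | h
      · exact h
      · rw [Finset.eq_of_subset_of_card_le h (hmax X hX)]
    have hcc := chain_count m h1 h2 h3 _ G hG rfl
    rw [Multiset.filter_eq_self.2 hsub] at hcc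
    have hGr := hM.2.1 G Finset.univ (Finset.subset_univ _)
    have hall : ∀ X ∈ m, X = G := by
      intro X hX
      by_contra hXG
      have := hcc.2 ⟨X, hX, (hsub X hX).ssubset_of_ne hXG⟩
      omega
    have hrep := Multiset.eq_replicate_card.2 hall
    refine ⟨1, ?_⟩
    conv_lhs => rw [hrep]
    rw [Multiset.map_replicate, Multiset.prod_replicate, one_smul,
      hb.eqRank G Finset.univ (hne G hG) (Finset.subset_univ _) (by omega)]

theorem neg_mul_neg_zero {B : Type} [CommRing B] (x y : B) (h : x * y = 0) : -x * -y = 0 := by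
  rw [neg_mul_neg, h]

/-- The class of `h_S` in the Chow ring, presented as a quotient. -/
noncomputable def hCls (rk : Finset α → ℕ) (S : Finset α) :
    MvPolynomial (NonemptyFlat rk) ℚ ⧸ chowIdealQ rk :=
  Ideal.Quotient.mk (chowIdealQ rk) (hPolyQ rk S)

/-- The class of `z_F`. -/
noncomputable def zCls (rk : Finset α → ℕ) (F : NonemptyFlat rk) :
    MvPolynomial (NonemptyFlat rk) ℚ ⧸ chowIdealQ rk :=
  Ideal.Quotient.mk (chowIdealQ rk) (MvPolynomial.X F)

theorem hCls_eq (rk : Finset α → ℕ) (S : Finset α) :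
    hCls rk S = -∑ F : NonemptyFlat rk, if S ⊆ F.1 then zCls rk F else 0 := by
  unfold hCls hPolyQ zCls
  rw [map_neg, map_sum]
  congr 1
  apply Finset.sum_congr rfl
  intro F _
  split_ifs <;> simp

theorem zCls_mul (rk : Finset α → ℕ) (F G : NonemptyFlat rk) (h1 : ¬ F.1 ⊆ G.1)
    (h2 : ¬ G.1 ⊆ F.1) : zCls rk F * zCls rk G = 0 := by
  unfold zCls
  rw [← map_mul, Ideal.Quotient.eq_zero_iff_mem]
  exact Ideal.subset_span (Or.inl ⟨F, G, h1, h2, rfl⟩)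

theorem hCls_diff (rk : Finset α → ℕ) (S T : Finset α) :
    hCls rk S - hCls rk (S ∪ T) =
      -∑ F : NonemptyFlat rk, if S ⊆ F.1 ∧ ¬ T ⊆ F.1 then zCls rk F else 0 := by
  rw [hCls_eq, hCls_eq, neg_sub_neg, ← neg_sub, ← Finset.sum_sub_distrib]
  congr 1
  apply Finset.sum_congr rfl
  intro F _
  have h3 : S ∪ T ⊆ F.1 ↔ S ⊆ F.1 ∧ T ⊆ F.1 := Finset.union_subset_iff
  by_cases h1 : S ⊆ F.1 <;> by_cases h2 : T ⊆ F.1 <;> simp [h1, h2, h3]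

theorem hCls_good {rk : Finset α → ℕ} (hM : IsMatroidRank rk) : GoodFam rk (hCls rk) where
  eqRank := by
    intro S T _ hST hr
    rw [hCls_eq, hCls_eq]
    congr 1
    apply Finset.sum_congr rfl
    intro F _
    have : S ⊆ F.1 ↔ T ⊆ F.1 := ⟨fun h => flat_subset hM hST hr h F.2.2, fun h => hST.trans h⟩
    simp only [this]
  single := by
    intro i
    unfold hCls hPolyQ
    rw [map_neg, neg_eq_zero, Ideal.Quotient.eq_zero_iff_mem]
    apply Ideal.subset_span
    right
    refine ⟨i, ?_⟩
    apply Finset.sum_congr rfl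
    intro F _
    simp only [Finset.singleton_subset_iff]
  rel := by
    intro S T _ _
    have h2 := hCls_diff rk T S
    rw [Finset.union_comm] at h2
    rw [hCls_diff, h2]
    refine neg_mul_neg_zero _ _ ?_
    rw [Finset.sum_mul_sum]
    apply Finset.sum_eq_zero
    intro F _
    apply Finset.sum_eq_zero
    intro G _
    by_cases h1 : S ⊆ F.1 ∧ ¬ T ⊆ F.1
    · by_cases h2 : T ⊆ G.1 ∧ ¬ S ⊆ G.1
      · rw [if_pos h1, if_pos h2]
        exact zCls_mul rk F G (fun h => h2.2 (h1.1.trans h)) (fun h => h1.2 (h2.1.trans h))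
      · rw [if_neg h2, mul_zero]
    · rw [if_neg h1, zero_mul]

theorem exists_moebius {P B : Type} [Fintype P] [AddCommGroup B] (c : P → Finset α)
    (hc : Function.Injective c) (g : P → B) :
    ∃ ζ : P → B, ∀ F, g F = ∑ G, if c F ⊆ c G then ζ G else 0 := by
  have hwf : WellFounded (fun F G : P => c G ⊂ c F) :=
    InvImage.wf c (wellFounded_gt (α := Finset α))
  let ζ : P → B := hwf.fix (fun F ih => g F - ∑ G, if h : c F ⊂ c G then ih G h else 0)
  refine ⟨ζ, fun F => ?_⟩
  have h1 : ζ F = g F - ∑ G, if c F ⊂ c G then ζ G else 0 := by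
    have := hwf.fix_eq (fun F (ih : ∀ G : P, c F ⊂ c G → B) =>
      g F - ∑ G, if h : c F ⊂ c G then ih G h else 0) F
    simp only [dite_eq_ite] at this
    exact this
  have h2 : (∑ G, if c F ⊆ c G then ζ G else 0) =
      ∑ G, ((if F = G then ζ G else 0) + if c F ⊂ c G then ζ G else 0) := by
    apply Finset.sum_congr rfl
    intro G _
    by_cases h : F = G
    · subst h
      simp
    · have h' : c F ≠ c G := fun e => h (hc e)
      have : c F ⊆ c G ↔ c F ⊂ c G := ⟨fun e => e.ssubset_of_ne h', fun e => e.1⟩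
      simp [h, this]
  rw [h2, Finset.sum_add_distrib, Finset.sum_ite_eq, if_pos (Finset.mem_univ _), h1]
  abel

theorem GoodFam.lift {rk : Finset α → ℕ} (hM : IsMatroidRank rk)
    {B : Type} [CommRing B] [Algebra ℚ B] {b : Finset α → B} (hb : GoodFam rk b) :
    ∃ f : (MvPolynomial (NonemptyFlat rk) ℚ ⧸ chowIdealQ rk) →ₐ[ℚ] B,
      ∀ S : Finset α, S.Nonempty → f (hCls rk S) = b S := by
  obtain ⟨ζ, hζ⟩ := exists_moebius (fun F : NonemptyFlat rk => F.1)
    Subtype.val_injective (fun F => - b F.1)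
  have hζ' : ∀ S : Finset α, S.Nonempty →
      - b S = ∑ G : NonemptyFlat rk, if S ⊆ G.1 then ζ G else 0 := by
    intro S hS
    obtain ⟨T, hST, hr, hT⟩ := exists_closure hM S
    rw [hb.eqRank S T hS hST hr]
    have := hζ ⟨T, hS.mono hST, hT⟩
    simp only at this
    rw [this]
    apply Finset.sum_congr rfl
    intro F _
    have : S ⊆ F.1 ↔ T ⊆ F.1 := ⟨fun h => flat_subset hM hST hr h F.2.2, fun h => hST.trans h⟩
    simp only [this]
  have hdiff : ∀ S T : Finset α, S.Nonempty →
      b S - b (S ∪ T) = -∑ F : NonemptyFlat rk, if S ⊆ F.1 ∧ ¬ T ⊆ F.1 then ζ F else 0 := by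
    intro S T hS
    have e1 := hζ' S hS
    have e2 := hζ' (S ∪ T) (hS.mono Finset.subset_union_left)
    have : (∑ F : NonemptyFlat rk, if S ⊆ F.1 ∧ ¬ T ⊆ F.1 then ζ F else 0) =
        (∑ G : NonemptyFlat rk, if S ⊆ G.1 then ζ G else 0) -
        ∑ G : NonemptyFlat rk, if S ∪ T ⊆ G.1 then ζ G else 0 := by
      rw [← Finset.sum_sub_distrib]
      apply Finset.sum_congr rfl
      intro F _
      have h3 : S ∪ T ⊆ F.1 ↔ S ⊆ F.1 ∧ T ⊆ F.1 := Finset.union_subset_iff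
      by_cases h1 : S ⊆ F.1 <;> by_cases h2 : T ⊆ F.1 <;> simp [h1, h2, h3]
    rw [this, ← e1, ← e2]
    ring
  have hinc : ∀ (n : ℕ) (F G : NonemptyFlat rk),
      (Finset.univ \ F.1).card + (Finset.univ \ G.1).card = n → ¬ F.1 ⊆ G.1 → ¬ G.1 ⊆ F.1 →
      ζ F * ζ G = 0 := by
    intro n
    induction n using Nat.strong_induction_on with
    | _ n ih =>
      intro F G hn hFG hGF
      have key := hb.rel F.1 G.1 F.2.1 G.2.1
      have h2 := hdiff G.1 F.1 G.2.1
      rw [Finset.union_comm] at h2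
      rw [hdiff _ _ F.2.1, h2, neg_mul_neg, Finset.sum_mul_sum] at key
      rw [Finset.sum_eq_single F, Finset.sum_eq_single G, if_pos ⟨Finset.Subset.refl _, hGF⟩,
        if_pos ⟨Finset.Subset.refl _, hFG⟩] at key
      · exact key
      · intro G' _ hG'
        by_cases h : G.1 ⊆ G'.1 ∧ ¬ F.1 ⊆ G'.1
        · rw [if_pos ⟨Finset.Subset.refl _, hGF⟩, if_pos h]
          refine ih _ ?_ F G' rfl h.2 (fun h' => hGF (h.1.trans h'))
          rw [← hn]
          have : (Finset.univ \ G'.1).card < (Finset.univ \ G.1).card := by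
            have : G.1 ⊂ G'.1 := h.1.ssubset_of_ne (fun e => hG' (Subtype.ext e.symm))
            have := Finset.card_lt_card this
            have a1 := Finset.card_sdiff_of_subset (Finset.subset_univ G.1)
            have a2 := Finset.card_sdiff_of_subset (Finset.subset_univ G'.1)
            have a3 := Finset.card_le_card (Finset.subset_univ G'.1)
            omega
          omega
        · rw [if_neg h, mul_zero]
      · intro h; exact absurd (Finset.mem_univ _) h
      · intro F' _ hF'
        apply Finset.sum_eq_zero
        intro G' _
        by_cases h : F.1 ⊆ F'.1 ∧ ¬ G.1 ⊆ F'.1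
        · by_cases h2 : G.1 ⊆ G'.1 ∧ ¬ F.1 ⊆ G'.1
          · rw [if_pos h, if_pos h2]
            refine ih _ ?_ F' G' rfl (fun h' => h2.2 (h.1.trans h')) (fun h' => h.2 (h2.1.trans h'))
            rw [← hn]
            have : (Finset.univ \ F'.1).card < (Finset.univ \ F.1).card := by
              have : F.1 ⊂ F'.1 := h.1.ssubset_of_ne (fun e => hF' (Subtype.ext e.symm))
              have := Finset.card_lt_card this
              have a1 := Finset.card_sdiff_of_subset (Finset.subset_univ F.1)
              have a2 := Finset.card_sdiff_of_subset (Finset.subset_univ F'.1)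
              have a3 := Finset.card_le_card (Finset.subset_univ F'.1)
              omega
            have : (Finset.univ \ G'.1).card ≤ (Finset.univ \ G.1).card :=
              Finset.card_le_card (Finset.sdiff_subset_sdiff (Finset.Subset.refl _) h2.1)
            omega
          · rw [if_neg h2, mul_zero]
        · rw [if_neg h, zero_mul]
      · intro h; exact absurd (Finset.mem_univ _) h
  have hker : ∀ p ∈ chowIdealQ rk, MvPolynomial.aeval ζ p = 0 := by
    intro p hp
    have : chowIdealQ rk ≤ RingHom.ker (MvPolynomial.aeval (R := ℚ) ζ).toRingHom := by
      unfold chowIdealQ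
      rw [Ideal.span_le]
      rintro q (⟨F, G, h1, h2, rfl⟩ | ⟨i, rfl⟩)
      · simp only [SetLike.mem_coe, RingHom.mem_ker, AlgHom.toRingHom_eq_coe, RingHom.coe_coe,
          map_mul, MvPolynomial.aeval_X]
        exact hinc _ F G rfl h1 h2
      · simp only [SetLike.mem_coe, RingHom.mem_ker, AlgHom.toRingHom_eq_coe, RingHom.coe_coe,
          map_sum]
        have := hζ' {i} (Finset.singleton_nonempty _)
        rw [hb.single, neg_zero] at this
        rw [this]
        apply Finset.sum_congr rfl
        intro F _
        simp only [Finset.singleton_subset_iff]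
        split_ifs <;> simp
    exact this hp
  refine ⟨Ideal.Quotient.liftₐ _ (MvPolynomial.aeval ζ) hker, fun S hS => ?_⟩
  have hz : ∀ F, Ideal.Quotient.liftₐ _ (MvPolynomial.aeval ζ) hker (zCls rk F) = ζ F := by
    intro F
    exact MvPolynomial.aeval_X ζ F
  rw [hCls_eq, map_neg, map_sum, ← neg_neg (b S), hζ' S hS]
  congr 1
  apply Finset.sum_congr rfl
  intro F _
  split_ifs
  · exact hz F
  · simp

/-- Total weight of `κ` on nonempty sets inside `U`. -/
def wtIn (κ : Finset α →₀ ℕ) (U : Finset α) : ℕ :=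
  ∑ A ∈ Finset.univ.filter (fun A : Finset α => A.Nonempty ∧ A ⊆ U), κ A

/-- Reformulated dragon Hall–Rado condition. -/
def DHR (rk : Finset α → ℕ) (κ : Finset α →₀ ℕ) : Prop :=
  ∀ U : Finset α, U.Nonempty → wtIn κ U + 1 ≤ rk U

theorem wtIn_add (κ μ : Finset α →₀ ℕ) (U : Finset α) :
    wtIn (κ + μ) U = wtIn κ U + wtIn μ U := by
  simp [wtIn, Finset.sum_add_distrib]

theorem wtIn_single (A : Finset α) (hA : A.Nonempty) (n : ℕ) (U : Finset α) :
    wtIn (Finsupp.single A n) U = if A ⊆ U then n else 0 := by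
  unfold wtIn
  simp only [Finsupp.single_apply]
  rw [Finset.sum_ite_eq]
  simp [hA]

theorem wtIn_mono (κ : Finset α →₀ ℕ) {U V : Finset α} (h : U ⊆ V) : wtIn κ U ≤ wtIn κ V := by
  unfold wtIn
  apply Finset.sum_le_sum_of_subset
  intro A
  simp only [Finset.mem_filter, Finset.mem_univ, true_and]
  exact fun hA => ⟨hA.1, hA.2.trans h⟩

theorem wtIn_empty (κ : Finset α →₀ ℕ) : wtIn κ ∅ = 0 := by
  unfold wtIn
  apply Finset.sum_eq_zero
  intro A
  simp only [Finset.mem_filter, Finset.mem_univ, true_and]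
  rintro ⟨h1, h2⟩
  rw [Finset.subset_empty] at h2
  subst h2
  exact absurd h1 Finset.not_nonempty_empty

theorem wtIn_super (κ : Finset α →₀ ℕ) (U V : Finset α) :
    wtIn κ U + wtIn κ V ≤ wtIn κ (U ∪ V) + wtIn κ (U ∩ V) := by
  unfold wtIn
  simp only [Finset.sum_filter]
  rw [← Finset.sum_add_distrib, ← Finset.sum_add_distrib]
  apply Finset.sum_le_sum
  intro A _
  by_cases h0 : A.Nonempty
  · by_cases h1 : A ⊆ U <;> by_cases h2 : A ⊆ V
    · have h3 : A ⊆ U ∪ V := h1.trans Finset.subset_union_left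
      simp [h0, h1, h2, h3, Finset.subset_inter_iff]
    · have h3 : A ⊆ U ∪ V := h1.trans Finset.subset_union_left
      simp [h0, h1, h2, h3, Finset.subset_inter_iff]
    · have h3 : A ⊆ U ∪ V := h2.trans Finset.subset_union_right
      simp [h0, h1, h2, h3, Finset.subset_inter_iff]
    · simp [h0, h1, h2]
  · simp [h0]

theorem DHR.swap {rk : Finset α → ℕ} (hM : IsMatroidRank rk) {S T : Finset α} (hS : S.Nonempty)
    (hST : S ⊆ T) (hr : rk S = rk T) (κ : Finset α →₀ ℕ) :
    DHR rk (Finsupp.single S 1 + κ) ↔ DHR rk (Finsupp.single T 1 + κ) := by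
  unfold DHR
  simp only [wtIn_add, wtIn_single _ hS, wtIn_single _ (hS.mono hST)]
  constructor
  · intro h U hU
    have := h U hU
    by_cases h1 : T ⊆ U
    · rw [if_pos (hST.trans h1)] at this
      rw [if_pos h1]; exact this
    · rw [if_neg h1]
      omega
  · intro h U hU
    by_cases h1 : S ⊆ U
    · have h2 := h (U ∪ T) (hU.mono Finset.subset_union_left)
      rw [if_pos Finset.subset_union_right, rk_union_eq hM hST hr h1] at h2
      have := wtIn_mono κ (Finset.subset_union_left : U ⊆ U ∪ T)
      rw [if_pos h1]
      omega
    · rw [if_neg h1]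
      have := h U hU
      omega

theorem DHR.single_false {rk : Finset α → ℕ} (hl : ∀ e : α, rk {e} = 1) (i : α)
    (κ : Finset α →₀ ℕ) : ¬ DHR rk (Finsupp.single {i} 1 + κ) := by
  intro h
  have := h {i} (Finset.singleton_nonempty _)
  rw [wtIn_add, wtIn_single _ (Finset.singleton_nonempty _), if_pos (Finset.Subset.refl _), hl] at this
  omega

/-- Indicator of `DHR`. -/
noncomputable def indD (rk : Finset α → ℕ) (κ : Finset α →₀ ℕ) : ℚ := if DHR rk κ then 1 else 0

theorem indD_rel {rk : Finset α → ℕ} (hM : IsMatroidRank rk) {S T : Finset α} (hS : S.Nonempty)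
    (hT : T.Nonempty) (κ : Finset α →₀ ℕ) :
    indD rk (Finsupp.single S 1 + Finsupp.single T 1 + κ)
      - indD rk (Finsupp.single S 1 + Finsupp.single (S ∪ T) 1 + κ)
      - indD rk (Finsupp.single T 1 + Finsupp.single (S ∪ T) 1 + κ)
      + indD rk (Finsupp.single (S ∪ T) 1 + Finsupp.single (S ∪ T) 1 + κ) = 0 := by
  have hU : (S ∪ T).Nonempty := hS.mono Finset.subset_union_left
  -- the three basic conditions
  let Q : Prop := ∀ U : Finset α, U.Nonempty → wtIn κ U + 1 ≤ rk U
  let a : Prop := ∀ U : Finset α, S ⊆ U → wtIn κ U + 2 ≤ rk U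
  let b : Prop := ∀ U : Finset α, T ⊆ U → wtIn κ U + 2 ≤ rk U
  let g : Prop := ∀ U : Finset α, S ∪ T ⊆ U → wtIn κ U + 3 ≤ rk U
  have e1 : DHR rk (Finsupp.single S 1 + Finsupp.single T 1 + κ) ↔ Q ∧ a ∧ b ∧ g := by
    unfold DHR
    simp only [wtIn_add, wtIn_single _ hS, wtIn_single _ hT]
    constructor
    · intro h
      refine ⟨fun U hU => ?_, fun U hU => ?_, fun U hU => ?_, fun U hU => ?_⟩
      · have := h U hU; omega
      · have := h U (hS.mono hU); rw [if_pos hU] at this; omega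
      · have := h U (hT.mono hU); rw [if_pos hU] at this; omega
      · have hU' := Finset.union_subset_iff.1 hU
        have := h U (hS.mono hU'.1); rw [if_pos hU'.1, if_pos hU'.2] at this; omega
    · rintro ⟨h0, ha, hb, hg⟩ U hU
      by_cases h1 : S ⊆ U <;> by_cases h2 : T ⊆ U
      · have := hg U (Finset.union_subset h1 h2); rw [if_pos h1, if_pos h2]; omega
      · have := ha U h1; rw [if_pos h1, if_neg h2]; omega
      · have := hb U h2; rw [if_neg h1, if_pos h2]; omega
      · have := h0 U hU; rw [if_neg h1, if_neg h2]; omega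
  have e2 : ∀ X : Finset α, X.Nonempty → X ⊆ S ∪ T →
      (DHR rk (Finsupp.single X 1 + Finsupp.single (S ∪ T) 1 + κ) ↔
        Q ∧ (∀ U : Finset α, X ⊆ U → wtIn κ U + 2 ≤ rk U) ∧ g) := by
    intro X hX hXU
    unfold DHR
    simp only [wtIn_add, wtIn_single _ hX, wtIn_single _ hU]
    constructor
    · intro h
      refine ⟨fun U hU => ?_, fun U hU => ?_, fun U hU => ?_⟩
      · have := h U hU; omega
      · have := h U (hX.mono hU); rw [if_pos hU] at this; omega
      · have := h U (hX.mono (hXU.trans hU)); rw [if_pos (hXU.trans hU), if_pos hU] at this; omega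
    · rintro ⟨h0, ha, hg⟩ U hU
      by_cases h2 : S ∪ T ⊆ U
      · have := hg U h2; rw [if_pos (hXU.trans h2), if_pos h2]; omega
      · by_cases h1 : X ⊆ U
        · have := ha U h1; rw [if_pos h1, if_neg h2]; omega
        · have := h0 U hU; rw [if_neg h1, if_neg h2]; omega
  have key : Q → g → a ∨ b := by
    intro hQ hg
    by_contra hcon
    push Not at hcon
    obtain ⟨ha, hb⟩ := hcon
    simp only [a, b] at ha hb
    push Not at ha hb
    obtain ⟨U, hSU, hU1⟩ := ha
    obtain ⟨V, hTV, hV1⟩ := hb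
    have h1 := hg (U ∪ V) (Finset.union_subset_union hSU hTV)
    have h2 := hM.2.2.1 U V
    have h3 := wtIn_super κ U V
    by_cases hne : (U ∩ V).Nonempty
    · have := hQ _ hne
      omega
    · rw [Finset.not_nonempty_iff_eq_empty] at hne
      rw [hne, wtIn_empty] at h3
      omega
  have e4 : Q ∧ (∀ U : Finset α, S ∪ T ⊆ U → wtIn κ U + 2 ≤ rk U) ∧ g ↔ Q ∧ g := by
    constructor
    · exact fun h => ⟨h.1, h.2.2⟩
    · exact fun h => ⟨h.1, fun U hU => by have := h.2 U hU; omega, h.2⟩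
  unfold indD
  rw [if_congr e1 rfl rfl, if_congr (e2 S hS Finset.subset_union_left) rfl rfl,
    if_congr (e2 T hT Finset.subset_union_right) rfl rfl,
    if_congr ((e2 (S ∪ T) hU (Finset.Subset.refl _)).trans e4) rfl rfl]
  change (if Q ∧ a ∧ b ∧ g then (1 : ℚ) else 0) - (if Q ∧ a ∧ g then (1 : ℚ) else 0)
    - (if Q ∧ b ∧ g then (1 : ℚ) else 0) + (if Q ∧ g then (1 : ℚ) else 0) = 0
  by_cases hQ : Q <;> by_cases ha : a <;> by_cases hb : b <;> by_cases hg : g <;>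
    simp [hQ, ha, hb, hg]
  exact absurd (key hQ hg) (by tauto)

/-- The linear functional on polynomials. -/
noncomputable def DLin (rk : Finset α → ℕ) : MvPolynomial (Finset α) ℚ →ₗ[ℚ] ℚ :=
  (MvPolynomial.basisMonomials (Finset α) ℚ).constr ℚ (indD rk)

theorem DLin_monomial (rk : Finset α → ℕ) (κ : Finset α →₀ ℕ) :
    DLin rk (MvPolynomial.monomial κ 1) = indD rk κ := by
  unfold DLin
  have := (MvPolynomial.basisMonomials (Finset α) ℚ).constr_basis ℚ (indD rk) κ
  rwa [MvPolynomial.coe_basisMonomials] at this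

/-- The largest ideal in the kernel of `DLin`. -/
noncomputable def DIdeal (rk : Finset α → ℕ) : Ideal (MvPolynomial (Finset α) ℚ) where
  carrier := {p | ∀ q, DLin rk (p * q) = 0}
  add_mem' := by
    intro p p' hp hp' q
    rw [add_mul, map_add, hp, hp', add_zero]
  zero_mem' := by intro q; simp
  smul_mem' := by
    intro c p hp q
    rw [smul_eq_mul, mul_comm c p, mul_assoc]
    exact hp _

theorem mem_DIdeal {rk : Finset α → ℕ} {p : MvPolynomial (Finset α) ℚ}
    (h : ∀ κ, DLin rk (p * MvPolynomial.monomial κ 1) = 0) : p ∈ DIdeal rk := by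
  intro q
  induction q using MvPolynomial.induction_on' with
  | monomial u a =>
    have : MvPolynomial.monomial u a = a • MvPolynomial.monomial (R := ℚ) u 1 := by
      rw [MvPolynomial.smul_monomial, smul_eq_mul, mul_one]
    rw [this, mul_smul_comm, map_smul, h, smul_zero]
  | add p q hp hq => rw [mul_add, map_add, hp, hq, add_zero]

theorem DB_good {rk : Finset α → ℕ} (hM : IsMatroidRank rk) (hl : ∀ e : α, rk {e} = 1) :
    GoodFam rk (fun S => Ideal.Quotient.mk (DIdeal rk) (MvPolynomial.X S)) where
  eqRank := by
    intro S T hS hST hr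
    rw [Ideal.Quotient.eq]
    apply mem_DIdeal
    intro κ
    simp only [sub_mul, MvPolynomial.X, MvPolynomial.monomial_mul, map_sub, mul_one, DLin_monomial,
      indD]
    rw [if_congr (DHR.swap hM hS hST hr κ) rfl rfl, sub_self]
  single := by
    intro i
    rw [Ideal.Quotient.eq_zero_iff_mem]
    apply mem_DIdeal
    intro κ
    simp only [MvPolynomial.X, MvPolynomial.monomial_mul, mul_one, DLin_monomial, indD]
    rw [if_neg (DHR.single_false hl i κ)]
  rel := by
    intro S T hS hT
    rw [← map_sub, ← map_sub, ← map_mul, Ideal.Quotient.eq_zero_iff_mem]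
    apply mem_DIdeal
    intro κ
    have e := indD_rel hM hS hT κ
    have : (MvPolynomial.X S - MvPolynomial.X (S ∪ T)) * (MvPolynomial.X T - MvPolynomial.X (S ∪ T))
        * MvPolynomial.monomial κ (1 : ℚ) =
        MvPolynomial.X S * MvPolynomial.X T * MvPolynomial.monomial κ (1 : ℚ)
        - MvPolynomial.X S * MvPolynomial.X (S ∪ T) * MvPolynomial.monomial κ (1 : ℚ)
        - MvPolynomial.X T * MvPolynomial.X (S ∪ T) * MvPolynomial.monomial κ (1 : ℚ)
        + MvPolynomial.X (S ∪ T) * MvPolynomial.X (S ∪ T) * MvPolynomial.monomial κ (1 : ℚ) := by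
      ring
    rw [this]
    simp only [MvPolynomial.X, MvPolynomial.monomial_mul, mul_one, map_sub, map_add, DLin_monomial]
    exact e

theorem exists_functional {rk : Finset α → ℕ} (hM : IsMatroidRank rk)
    (hl : ∀ e : α, rk {e} = 1) :
    ∃ D : (MvPolynomial (NonemptyFlat rk) ℚ ⧸ chowIdealQ rk) →ₗ[ℚ] ℚ,
      ∀ (m : ℕ) (S : Fin m → Finset α) (κ : Fin m → ℕ), (∀ i, (S i).Nonempty) →
        D (∏ i, hCls rk (S i) ^ κ i) = if DragonHallRado rk S κ then 1 else 0 := by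
  obtain ⟨f, hf⟩ := (DB_good hM hl).lift hM
  let D0 : (MvPolynomial (Finset α) ℚ ⧸ DIdeal rk) →ₗ[ℚ] ℚ :=
    ((DIdeal rk).restrictScalars ℚ).liftQ (DLin rk) (by
      intro p hp
      have := hp 1
      rw [mul_one] at this
      exact this)
  refine ⟨D0.comp f.toLinearMap, ?_⟩
  intro m S κ hS
  have hprod : (∏ i, (MvPolynomial.X (S i) : MvPolynomial (Finset α) ℚ) ^ κ i) =
      MvPolynomial.monomial (∑ i, Finsupp.single (S i) (κ i)) 1 := by
    rw [MvPolynomial.monomial_sum_one]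
    apply Finset.prod_congr rfl
    intro i _
    rw [MvPolynomial.X_pow_eq_monomial]
  have h1 : f (∏ i, hCls rk (S i) ^ κ i) =
      Ideal.Quotient.mk (DIdeal rk) (MvPolynomial.monomial (∑ i, Finsupp.single (S i) (κ i)) 1) := by
    rw [← hprod, map_prod, map_prod]
    apply Finset.prod_congr rfl
    intro i _
    rw [map_pow, map_pow, hf _ (hS i)]
  rw [LinearMap.comp_apply, AlgHom.toLinearMap_apply, h1]
  change DLin rk _ = _
  rw [DLin_monomial, indD]
  apply if_congr _ rfl rfl
  have hw : ∀ U, wtIn (∑ i, Finsupp.single (S i) (κ i)) U = ∑ i, if S i ⊆ U then κ i else 0 := by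
    intro U
    have : ∀ s : Finset (Fin m), wtIn (∑ i ∈ s, Finsupp.single (S i) (κ i)) U
        = ∑ i ∈ s, if S i ⊆ U then κ i else 0 := by
      intro s
      induction s using Finset.induction_on with
      | empty => simp [wtIn]
      | insert a s ha ih =>
        rw [Finset.sum_insert ha, Finset.sum_insert ha, wtIn_add, ih, wtIn_single _ (hS a)]
    exact this _
  unfold DHR DragonHallRado
  simp only [hw]
  constructor
  · intro h I hI
    obtain ⟨i0, hi0⟩ := hI
    have h2 := h (I.biUnion S) ((hS i0).mono (Finset.subset_biUnion_of_mem S hi0))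
    have h3 : ∑ i ∈ I, κ i ≤ ∑ i, if S i ⊆ I.biUnion S then κ i else 0 := by
      calc ∑ i ∈ I, κ i = ∑ i ∈ I, if S i ⊆ I.biUnion S then κ i else 0 := by
            apply Finset.sum_congr rfl
            intro i hi
            rw [if_pos (Finset.subset_biUnion_of_mem S hi)]
        _ ≤ _ := Finset.sum_le_sum_of_subset (Finset.subset_univ _)
    omega
  · intro h U hU
    by_cases hI : (Finset.univ.filter (fun i => S i ⊆ U)).Nonempty
    · have h2 := h _ hI
      have h3 := hM.2.1 ((Finset.univ.filter (fun i => S i ⊆ U)).biUnion S) U (by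
        rw [Finset.biUnion_subset]
        intro i hi
        exact (Finset.mem_filter.1 hi).2)
      rw [Finset.sum_filter] at h2
      omega
    · rw [Finset.not_nonempty_iff_eq_empty] at hI
      rw [← Finset.sum_filter, hI, Finset.sum_empty]
      obtain ⟨e, he⟩ := hU
      have := hM.2.1 {e} U (by simpa using he)
      rw [hl] at this
      omega

/-- Exponential generating functions of the coefficients of rising factorials. -/
noncomputable def stirSer (j : ℕ) : PowerSeries ℚ :=
  PowerSeries.mk fun n => (binomLowerP Polynomial.X n).coeff j

theorem binomLowerP_succ (p : Polynomial ℚ) (n : ℕ) :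
    ((n : ℚ) + 1) • binomLowerP p (n + 1) = binomLowerP p n * (p + Polynomial.C (n : ℚ)) := by
  unfold binomLowerP
  rw [Finset.prod_range_succ, smul_smul, smul_mul_assoc]
  congr 1
  rw [Nat.factorial_succ]
  have : (n.factorial : ℚ) ≠ 0 := by positivity
  have : (n : ℚ) + 1 ≠ 0 := by positivity
  push_cast
  field_simp

theorem stirSer_const_succ (j : ℕ) : PowerSeries.constantCoeff (stirSer (j + 1)) = 0 := by
  rw [← PowerSeries.coeff_zero_eq_constantCoeff_apply, stirSer, PowerSeries.coeff_mk]
  simp [binomLowerP, Polynomial.coeff_one]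

theorem stirSer_zero : stirSer 0 = 1 := by
  ext n
  rw [stirSer, PowerSeries.coeff_mk, PowerSeries.coeff_one]
  cases n with
  | zero => simp [binomLowerP]
  | succ n =>
    rw [binomLowerP, Polynomial.coeff_smul, Polynomial.coeff_zero_eq_eval_zero,
      Polynomial.eval_prod, Finset.prod_eq_zero (i := 0) (by simp) (by simp)]
    simp

theorem stirSer_deriv (j : ℕ) :
    (1 - PowerSeries.X) * PowerSeries.derivative ℚ (stirSer (j + 1)) = stirSer j := by
  ext n
  have h := congrArg (fun p => Polynomial.coeff p (j + 1)) (binomLowerP_succ Polynomial.X n)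
  simp only [Polynomial.coeff_smul, smul_eq_mul, mul_add, Polynomial.coeff_add,
    Polynomial.coeff_mul_X, Polynomial.coeff_mul_C] at h
  rw [sub_mul, one_mul, map_sub, PowerSeries.coeff_derivative]
  cases n with
  | zero =>
    simp [stirSer] at h ⊢
    linarith
  | succ n =>
    rw [PowerSeries.coeff_succ_X_mul, PowerSeries.coeff_derivative]
    simp only [stirSer, PowerSeries.coeff_mk]
    push_cast at h ⊢
    linarith

theorem one_sub_X_ne : (1 - PowerSeries.X : PowerSeries ℚ) ≠ 0 := by
  intro h
  have := congrArg PowerSeries.constantCoeff h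
  simp at this

theorem stirSer_pow (j : ℕ) : (j.factorial : ℚ) • stirSer j = stirSer 1 ^ j := by
  induction j with
  | zero => simp [stirSer_zero]
  | succ j ih =>
    apply PowerSeries.derivative.ext
    · apply mul_left_cancel₀ one_sub_X_ne
      have h1 := stirSer_deriv 0
      have h2 := stirSer_deriv j
      rw [stirSer_zero, zero_add] at h1
      rw [PowerSeries.derivative_pow, Derivation.map_smul, mul_smul_comm, h2, Nat.add_sub_cancel, ← ih,
        Nat.factorial_succ]
      rw [show (1 - PowerSeries.X) * (((j + 1 : ℕ) : PowerSeries ℚ) * (j.factorial : ℚ) • stirSer j *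
        PowerSeries.derivative ℚ (stirSer 1)) = (((j + 1 : ℕ) : PowerSeries ℚ) * (j.factorial : ℚ) • stirSer j)
        * ((1 - PowerSeries.X) * PowerSeries.derivative ℚ (stirSer 1)) by ring, h1, mul_one]
      rw [Nat.cast_mul, mul_smul, ← nsmul_eq_mul, Nat.cast_smul_eq_nsmul]
    · rw [map_pow, stirSer_const_succ 0, zero_pow (Nat.succ_ne_zero _),
        PowerSeries.smul_eq_C_mul, map_mul, stirSer_const_succ, mul_zero]

variable {A : Type} [CommRing A] [Algebra ℚ A]

/-- Evaluation of a power series at a nilpotent element. -/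
noncomputable def evNil (h : A) (r : ℕ) (f : PowerSeries ℚ) : A :=
  Polynomial.aeval h (PowerSeries.trunc r f)

theorem aeval_trunc (h : A) (r : ℕ) (hh : h ^ r = 0) (p : Polynomial ℚ) :
    Polynomial.aeval h (PowerSeries.trunc r (p : PowerSeries ℚ)) = Polynomial.aeval h p := by
  have hd : (Polynomial.X : Polynomial ℚ) ^ r ∣ p - PowerSeries.trunc r (p : PowerSeries ℚ) := by
    rw [Polynomial.X_pow_dvd_iff]
    intro d hd
    rw [Polynomial.coeff_sub, PowerSeries.coeff_trunc, if_pos hd, Polynomial.coeff_coe, sub_self]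
  obtain ⟨q, hq⟩ := hd
  have := congrArg (Polynomial.aeval h) hq
  rw [map_sub, map_mul, map_pow, Polynomial.aeval_X, hh, zero_mul, sub_eq_zero] at this
  exact this.symm

theorem evNil_mul (h : A) (r : ℕ) (hh : h ^ r = 0) (f g : PowerSeries ℚ) :
    evNil h r (f * g) = evNil h r f * evNil h r g := by
  unfold evNil
  rw [← PowerSeries.trunc_trunc_mul_trunc, ← Polynomial.coe_mul, aeval_trunc h r hh, map_mul]

theorem evNil_pow (h : A) (r : ℕ) (hr : 1 ≤ r) (hh : h ^ r = 0) (f : PowerSeries ℚ) (n : ℕ) :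
    evNil h r (f ^ n) = evNil h r f ^ n := by
  induction n with
  | zero =>
    obtain ⟨r, rfl⟩ : ∃ r', r = r' + 1 := ⟨r - 1, by omega⟩
    simp [evNil]
  | succ n ih => rw [pow_succ, pow_succ, evNil_mul h r hh, ih]

theorem evNil_eq_sum (h : A) (r : ℕ) (f : PowerSeries ℚ) :
    evNil h r f = ∑ n ∈ Finset.range r, PowerSeries.coeff n f • h ^ n := by
  unfold evNil
  rw [PowerSeries.trunc_apply, ← Finset.range_eq_Ico, map_sum]
  apply Finset.sum_congr rfl
  intro n _
  rw [Polynomial.aeval_monomial, Algebra.smul_def]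

theorem evNil_smul (h : A) (r : ℕ) (c : ℚ) (f : PowerSeries ℚ) :
    evNil h r (c • f) = c • evNil h r f := by
  simp only [evNil_eq_sum, Finset.smul_sum, smul_smul, map_smul, smul_eq_mul]

theorem binomLowerP_comp (k : ℚ) (n : ℕ) :
    binomLowerP (Polynomial.C k * Polynomial.X) n =
      (binomLowerP Polynomial.X n).comp (Polynomial.C k * Polynomial.X) := by
  unfold binomLowerP
  rw [Polynomial.smul_comp, Polynomial.prod_comp]
  simp

theorem binom_sum (h : A) (r : ℕ) (hr : 1 ≤ r) (hh : h ^ r = 0) (k : ℚ) (j : ℕ) :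
    ∑ n ∈ Finset.range r, (binomLowerP (Polynomial.C k * Polynomial.X) n).coeff j • h ^ n
      = (j.factorial : ℚ)⁻¹ • (k • evNil h r (stirSer 1)) ^ j := by
  have h1 : evNil h r (stirSer j) = (j.factorial : ℚ)⁻¹ • evNil h r (stirSer 1) ^ j := by
    rw [← evNil_pow h r hr hh, ← stirSer_pow, evNil_smul, smul_smul, inv_mul_cancel₀, one_smul]
    positivity
  rw [_root_.smul_pow, smul_comm, ← h1, evNil_eq_sum, Finset.smul_sum]
  apply Finset.sum_congr rfl
  intro n _
  rw [binomLowerP_comp, Polynomial.comp_C_mul_X_coeff, stirSer, PowerSeries.coeff_mk, smul_smul,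
    mul_comm]

theorem prod_exp {ι : Type} (s : Finset ι) (a : ι → A) :
    ∏ i ∈ s, PowerSeries.rescale (a i) (PowerSeries.exp A) =
      PowerSeries.rescale (∑ i ∈ s, a i) (PowerSeries.exp A) := by
  induction s using Finset.induction_on with
  | empty =>
    ext n
    rw [Finset.prod_empty, Finset.sum_empty, PowerSeries.coeff_rescale, PowerSeries.coeff_one]
    cases n <;> simp
  | insert i s hi ih =>
    rw [Finset.prod_insert hi, Finset.sum_insert hi, ih, PowerSeries.exp_mul_exp_eq_exp_add]

theorem snapper_coeff (D : A →ₗ[ℚ] ℚ) {m r : ℕ} (hr : 1 ≤ r) (h : Fin m → A)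
    (hh : ∀ i, h i ^ r = 0) (k : Fin m → ℚ) (j : ℕ) :
    ∑ κ ∈ Fintype.piFinset (fun _ : Fin m => Finset.range r), D (∏ i, h i ^ κ i) *
      (∏ i, binomLowerP (Polynomial.C (k i) * Polynomial.X) (κ i)).coeff j =
    (j.factorial : ℚ)⁻¹ * D ((∑ i, k i • evNil (h i) r (stirSer 1)) ^ j) := by
  have hG : ∀ i, PowerSeries.rescale (k i • evNil (h i) r (stirSer 1)) (PowerSeries.exp A) =
      ∑ n ∈ Finset.range r, PowerSeries.C (h i ^ n) * (((binomLowerP (Polynomial.C (k i) * Polynomial.X) n).map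
        (algebraMap ℚ A) : Polynomial A) : PowerSeries A) := by
    intro i
    ext j
    rw [PowerSeries.coeff_rescale, PowerSeries.coeff_exp, map_sum]
    have := binom_sum (h i) r hr (hh i) (k i) j
    rw [one_div, mul_comm, ← Algebra.smul_def, ← this]
    apply Finset.sum_congr rfl
    intro n _
    rw [PowerSeries.coeff_C_mul, Polynomial.coeff_coe, Polynomial.coeff_map, Algebra.smul_def,
      mul_comm]
  have hP := prod_exp Finset.univ (fun i => k i • evNil (h i) r (stirSer 1))
  simp only [hG] at hP
  rw [Finset.prod_univ_sum] at hP
  have hc := congrArg (PowerSeries.coeff j) hP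
  rw [PowerSeries.coeff_rescale, PowerSeries.coeff_exp, map_sum, one_div, mul_comm,
    ← Algebra.smul_def] at hc
  have hD := congrArg D hc
  rw [map_smul, smul_eq_mul, map_sum] at hD
  rw [← hD]
  apply Finset.sum_congr rfl
  intro κ _
  have : ∏ i, (PowerSeries.C (h i ^ κ i) * (((binomLowerP (Polynomial.C (k i) * Polynomial.X) (κ i)).map
        (algebraMap ℚ A) : Polynomial A) : PowerSeries A)) =
      PowerSeries.C (∏ i, h i ^ κ i) * (((∏ i, binomLowerP (Polynomial.C (k i) * Polynomial.X) (κ i)).map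
        (algebraMap ℚ A) : Polynomial A) : PowerSeries A) := by
    rw [Finset.prod_mul_distrib, map_prod, Polynomial.map_prod]
    congr 1
    exact (map_prod (Polynomial.coeToPowerSeries.ringHom (R := A)) _ _).symm
  rw [this, PowerSeries.coeff_C_mul, Polynomial.coeff_coe, Polynomial.coeff_map, mul_comm (∏ i, _),
    ← Algebra.smul_def, map_smul, smul_eq_mul, mul_comm]

theorem evNil_good {rk : Finset α → ℕ} {b : Finset α → A} (hb : GoodFam rk b) (r : ℕ) :
    GoodFam rk (fun S => evNil (b S) r (stirSer 1)) where
  eqRank := by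
    intro S T hS hST hr
    simp only [hb.eqRank S T hS hST hr]
  single := by
    intro i
    simp only [hb.single, evNil_eq_sum]
    apply Finset.sum_eq_zero
    intro n _
    cases n with
    | zero => rw [PowerSeries.coeff_zero_eq_constantCoeff_apply, stirSer_const_succ 0, zero_smul]
    | succ n => rw [zero_pow (Nat.succ_ne_zero _), smul_zero]
  rel := by
    intro S T hS hT
    have hdvd : ∀ x y : A, x - y ∣ evNil x r (stirSer 1) - evNil y r (stirSer 1) := by
      intro x y
      unfold evNil
      rw [Polynomial.aeval_def, Polynomial.aeval_def, ← Polynomial.eval_map, ← Polynomial.eval_map]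
      exact Polynomial.sub_dvd_eval_sub _ _ _
    obtain ⟨u, hu⟩ := hdvd (b S) (b (S ∪ T))
    obtain ⟨v, hv⟩ := hdvd (b T) (b (S ∪ T))
    simp only [hu, hv]
    linear_combination u * v * hb.rel S T hS hT

theorem evNil_top (h : A) (r : ℕ) (hr : 1 ≤ r) (hh : h ^ r = 0) :
    evNil h r (stirSer 1) ^ (r - 1) = h ^ (r - 1) := by
  have hc1 : PowerSeries.coeff 1 (stirSer 1) = 1 := by
    simp [stirSer, binomLowerP]
  have hdiv : h * h ∣ evNil h r (stirSer 1) - h ∨ r = 1 := by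
    by_cases h1 : r = 1
    · exact Or.inr h1
    left
    obtain ⟨s, rfl⟩ : ∃ s, r = s + 2 := ⟨r - 2, by omega⟩
    rw [evNil_eq_sum, Finset.sum_range_succ', Finset.sum_range_succ',
      PowerSeries.coeff_zero_eq_constantCoeff_apply, stirSer_const_succ 0, hc1]
    simp only [zero_smul, zero_add, pow_one, one_smul, add_zero, add_sub_cancel_right]
    apply Finset.dvd_sum
    intro n _
    rw [Algebra.smul_def]
    exact Dvd.dvd.mul_left ⟨h ^ n, by ring⟩ _
  rcases hdiv with ⟨u, hu⟩ | rfl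
  · have e : evNil h r (stirSer 1) = h * (1 + h * u) := by linear_combination hu
    have : h ∣ (1 + h * u) ^ (r - 1) - 1 := by
      have := sub_dvd_pow_sub_pow (1 + h * u) 1 (r - 1)
      rw [one_pow] at this
      exact Dvd.dvd.trans ⟨u, by ring⟩ this
    obtain ⟨v, hv⟩ := this
    have e2 : h ^ (r - 1) * h = 0 := by
      rw [← pow_succ, Nat.sub_add_cancel hr, hh]
    rw [e, mul_pow]
    linear_combination h ^ (r - 1) * hv + v * e2
  · simp

end Helpers

/-- For a loopless matroid `M` of rank `r ≥ 1`, distinct nonempty subsets `S_1, …, S_m` and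
integers `k_1, …, k_m`, the Snapper polynomial
`χ(q) = Σ_{κ dragon Hall–Rado} Π_i binom(q k_i + κ_i - 1, κ_i)` has degree at most the
numerical dimension of `c = Σ k_i h_{S_i}` (the largest `j` with `c^j ≠ 0` in `A(M)_ℚ`, which
exists), and its degree equals `r - 1` if and only if `c^{r-1} ≠ 0`. -/
theorem snapper_degree_le_numerical_dimension
    {α : Type} [Fintype α] [DecidableEq α] {m r : ℕ}
    (rk : Finset α → ℕ) (hM : IsMatroidRank rk) (hloopless : ∀ e : α, rk {e} = 1)
    (hrank : rk Finset.univ = r) (hr : 1 ≤ r)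
    (S : Fin m → Finset α) (hS : ∀ i, (S i).Nonempty) (hSinj : Function.Injective S)
    (k : Fin m → ℤ)
    (χ : Polynomial ℚ)
    (hχ : χ = ∑ᶠ (κ : Fin m → ℕ) (_ : DragonHallRado rk S κ),
      ∏ i, binomLowerP (Polynomial.C (k i : ℚ) * Polynomial.X) (κ i))
    (c : ChowRingQ rk)
    (hc : c = Ideal.Quotient.mk (chowIdealQ rk)
      (∑ i, MvPolynomial.C (k i : ℚ) * hPolyQ rk (S i))) :
    (∃ j : ℕ, c ^ j ≠ 0 ∧ (∀ l : ℕ, c ^ l ≠ 0 → l ≤ j) ∧ χ.natDegree ≤ j) ∧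
      (χ.natDegree = r - 1 ↔ c ^ (r - 1) ≠ 0) := by
  have hgood := hCls_good hM
  have hunivne : (Finset.univ : Finset α).Nonempty := by
    rw [Finset.nonempty_iff_ne_empty]
    intro h
    rw [h, hM.1] at hrank
    omega
  obtain ⟨D, hD⟩ := exists_functional hM hloopless
  obtain ⟨θ, hθ⟩ := (evNil_good hgood r).lift hM
  have hrkle : ∀ S : Finset α, rk S ≤ r := fun S => hrank ▸ hM.2.1 S _ (Finset.subset_univ _)
  have hnil : ∀ S : Finset α, S.Nonempty → hCls rk S ^ r = 0 := fun S hS =>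
    hgood.pow_zero' hM hloopless S hS r (hrkle S)
  -- the class as a linear combination
  let c' : MvPolynomial (NonemptyFlat rk) ℚ ⧸ chowIdealQ rk := c
  have hc' : c' = ∑ i, (k i : ℚ) • hCls rk (S i) := by
    have e : Ideal.Quotient.mk (chowIdealQ rk)
        (∑ i, MvPolynomial.C (k i : ℚ) * hPolyQ rk (S i)) =
        ∑ i, (k i : ℚ) • hCls rk (S i) := by
      rw [map_sum]
      apply Finset.sum_congr rfl
      intro i _
      rw [map_mul]
      exact (Algebra.smul_def (k i : ℚ) (hCls rk (S i))).symm
    exact hc.trans e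
  change (∃ j : ℕ, c' ^ j ≠ 0 ∧ (∀ l : ℕ, c' ^ l ≠ 0 → l ≤ j) ∧ χ.natDegree ≤ j) ∧
      (χ.natDegree = r - 1 ↔ c' ^ (r - 1) ≠ 0)
  clear_value c'
  have hχ' : χ = ∑ κ ∈ Fintype.piFinset (fun _ : Fin m => Finset.range r),
      Polynomial.C (D (∏ i, hCls rk (S i) ^ κ i)) *
        ∏ i, binomLowerP (Polynomial.C (k i : ℚ) * Polynomial.X) (κ i) := by
    rw [hχ, finsum_eq_sum_of_support_subset (s := Fintype.piFinset (fun _ : Fin m => Finset.range r))]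
    · apply Finset.sum_congr rfl
      intro κ _
      rw [hD m S κ hS, finsum_eq_if]
      split_ifs <;> simp
    · intro κ hκ
      rw [Function.mem_support, finsum_eq_if] at hκ
      have hdr : DragonHallRado rk S κ := by
        by_contra h
        rw [if_neg h] at hκ
        exact hκ rfl
      rw [Finset.mem_coe, Fintype.mem_piFinset]
      intro i
      have h1 := hdr {i} (Finset.singleton_nonempty _)
      rw [Finset.sum_singleton] at h1
      have h2 := hrkle (({i} : Finset (Fin m)).biUnion S)
      rw [Finset.mem_range]
      omega
  have hcoeff : ∀ j, χ.coeff j = (j.factorial : ℚ)⁻¹ * D (θ (c' ^ j)) := by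
    intro j
    have h1 := snapper_coeff D hr (fun i => hCls rk (S i)) (fun i => hnil _ (hS i))
      (fun i => (k i : ℚ)) j
    have h2 : θ c' = ∑ i, (k i : ℚ) • evNil (hCls rk (S i)) r (stirSer 1) := by
      rw [hc', map_sum]
      apply Finset.sum_congr rfl
      intro i _
      rw [map_smul, hθ _ (hS i)]
    rw [map_pow, h2, ← h1, hχ', Polynomial.finsetSum_coeff]
    apply Finset.sum_congr rfl
    intro κ _
    rw [Polynomial.coeff_C_mul]
  have htop : ∀ n : ℕ, r ≤ n + 1 → ∃ a : ℚ, c' ^ n = a • hCls rk Finset.univ ^ n := by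
    intro n hn
    have h1 : ∀ p : Fin n → Fin m, ∃ a : ℚ, ∏ i, ((k (p i) : ℚ) • hCls rk (S (p i))) =
        a • hCls rk Finset.univ ^ n := by
      intro p
      obtain ⟨a, ha⟩ := hgood.top hM hloopless _ (Finset.univ.val.map (fun i => S (p i))) rfl
        (by
          intro X hX
          rw [Multiset.mem_map] at hX
          obtain ⟨i, -, rfl⟩ := hX
          exact hS _) (by simp [hrank, hn])
      rw [Multiset.map_map] at ha
      have hcard : (Multiset.map (fun i => S (p i)) Finset.univ.val).card = n := by simp
      rw [hcard] at ha
      refine ⟨(∏ i, (k (p i) : ℚ)) * a, ?_⟩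
      rw [mul_smul, ← ha, Finset.prod_smul]
      rfl
    choose a ha using h1
    refine ⟨∑ p, a p, ?_⟩
    rw [hc', Fintype.sum_pow, Finset.sum_smul]
    exact Finset.sum_congr rfl (fun p _ => ha p)
  have hD1 : D 1 = 1 := by
    have := hD 0 Fin.elim0 Fin.elim0 (fun i => i.elim0)
    rw [if_pos] at this
    · simpa using this
    · intro I hI
      obtain ⟨i, _⟩ := hI
      exact i.elim0
  have hDtop : D (hCls rk Finset.univ ^ (r - 1)) = 1 := by
    have := hD 1 (fun _ => Finset.univ) (fun _ => r - 1) (fun _ => hunivne)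
    rw [if_pos] at this
    · simpa using this
    · intro I hI
      have hI' : I = Finset.univ := by
        obtain ⟨i, hi⟩ := hI
        ext x
        have : x = i := Subsingleton.elim _ _
        rw [this]
        exact ⟨fun _ => Finset.mem_univ _, fun _ => hi⟩
      subst hI'
      simp [hrank]
      omega
  have h1ne : c' ^ 0 ≠ 0 := by
    intro h
    rw [pow_zero] at h
    rw [h, map_zero] at hD1
    exact zero_ne_one hD1
  have hvan : ∀ l, c' ^ l ≠ 0 → l ≤ r - 1 := by
    intro l hl
    by_contra hcon
    obtain ⟨a, ha⟩ := htop l (by omega)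
    apply hl
    rw [ha, hgood.pow_zero' hM hloopless _ hunivne l (by rw [hrank]; omega), smul_zero]
  have hdeg : ∀ j, (∀ l, c' ^ l ≠ 0 → l ≤ j) → χ.natDegree ≤ j := by
    intro j hj
    rw [Polynomial.natDegree_le_iff_coeff_eq_zero]
    intro N hN
    rw [hcoeff]
    have : c' ^ N = 0 := by
      by_contra h
      have := hj N h
      omega
    rw [this, map_zero, map_zero, mul_zero]
  constructor
  · refine ⟨Nat.findGreatest (fun l => c' ^ l ≠ 0) (r - 1), ?_, ?_, ?_⟩
    · exact Nat.findGreatest_spec (P := fun l => c' ^ l ≠ 0) (Nat.zero_le _) h1ne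
    · intro l hl
      exact Nat.le_findGreatest (hvan l hl) hl
    · apply hdeg
      intro l hl
      exact Nat.le_findGreatest (hvan l hl) hl
  · constructor
    · intro h hcon
      have h0 : χ ≠ 0 := by
        intro h0
        have := hcoeff 0
        rw [h0, pow_zero, map_one, hD1] at this
        simp at this
      have h2 := hcoeff (r - 1)
      rw [hcon, map_zero, map_zero, mul_zero, ← h] at h2
      exact h0 (Polynomial.leadingCoeff_eq_zero.1 h2)
    · intro h
      apply le_antisymm (hdeg _ hvan)
      apply Polynomial.le_natDegree_of_ne_zero
      obtain ⟨a, ha⟩ := htop (r - 1) (by omega)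
      rw [hcoeff, ha, map_smul, map_pow, hθ _ hunivne, evNil_top _ r hr (hnil _ hunivne), map_smul,
        hDtop, smul_eq_mul, mul_one]
      apply mul_ne_zero
      · positivity
      · rintro rfl
        rw [zero_smul] at ha
        exact h ha
end
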